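/- Asymptotic stability of the linear evolutions: there exists an absolute constant C > 0 such that the following holds. Let J = [t₁,t₂], let u be a classical solution of ∂ₜₜu − Δu = −f(u) on J with energy E and a priori bound sup_{t∈J} ‖u(t,·)‖_{H̃²(ℝ³)} ≤ M. Let J' = [t₁', t₂'] ⊆ J and let t ∈ J \ J'. For i = 1,2 let vᵢ : ℝ × ℝ³ → ℝ be the smooth solution of the free wave equation ∂ₜₜvᵢ − Δvᵢ = 0 with vᵢ(tᵢ',·) = u(tᵢ',·) and ∂ₜvᵢ(tᵢ',·) = ∂ₜu(tᵢ',·). Then sup_{x∈ℝ³} |v₂(t,x) − v₁(t,x)| ≤ C·E^{5/6}·g(M)^{1/6} / dist(t, J')^{1/2}. -/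

import Mathlib

open MeasureTheory Set

noncomputable section

abbrev Space : Type := EuclideanSpace ℝ (Fin 3)

/-- The loglog weight `g(u) = (log log (10 + u²))^c`. -/
def g (c u : ℝ) : ℝ := Real.log (Real.log (10 + u ^ 2)) ^ c

/-- The nonlinearity `f(u) = u⁵ g(u)`. -/
def f (c u : ℝ) : ℝ := u ^ 5 * g c u

/-- The potential `F(u) = ∫₀ᵘ f(v) dv`. -/
def Fpot (c u : ℝ) : ℝ := ∫ v in (0:ℝ)..u, f c v

/-- First time derivative `∂ₜ u`. -/
def dt1 (u : ℝ → Space → ℝ) (t : ℝ) (x : Space) : ℝ := deriv (fun s => u s x) t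

/-- Second time derivative `∂ₜₜ u`. -/
def dt2 (u : ℝ → Space → ℝ) (t : ℝ) (x : Space) : ℝ := deriv (fun s => dt1 u s x) t

/-- The spatial Laplacian. -/
def lap (h : Space → ℝ) (x : Space) : ℝ :=
  ∑ i : Fin 3, fderiv ℝ (fun y => fderiv ℝ h y (EuclideanSpace.single i 1)) x
    (EuclideanSpace.single i 1)

/-- A classical solution of `∂ₜₜ u - Δ u = -f(u)` on the time interval `J`:
infinitely differentiable, compactly supported in space for each fixed time,
and satisfying the equation. -/
structure IsClassicalSol (c : ℝ) (J : Set ℝ) (u : ℝ → Space → ℝ) : Prop where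
  smooth : ContDiffOn ℝ (⊤ : ℕ∞) (fun p : ℝ × Space => u p.1 p.2) (J ×ˢ (Set.univ : Set Space))
  compactSpt : ∀ t ∈ J, HasCompactSupport (u t)
  eqn : ∀ t ∈ J, ∀ x : Space, dt2 u t x - lap (u t) x = - f c (u t x)

/-- The conserved energy. -/
def energy (c : ℝ) (u : ℝ → Space → ℝ) (t : ℝ) : ℝ :=
  (1/2) * (∫ x : Space, (dt1 u t x) ^ 2)
    + (1/2) * (∫ x : Space, ‖gradient (u t) x‖ ^ 2)
    + ∫ x : Space, Fpot c (u t x)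

/-- Spatial `L^r` norm. -/
def LxNorm (r : ℝ) (h : Space → ℝ) : ℝ := (∫ x : Space, |h x| ^ r) ^ (1 / r)

/-- Mixed norm `L^q_t L^r_x (J × ℝ³)`. -/
def LtLxNorm (q r : ℝ) (J : Set ℝ) (u : ℝ → Space → ℝ) : ℝ :=
  (∫ t in J, (LxNorm r (u t)) ^ q) ^ (1 / q)

/-- The homogeneous `H̃² = Ḣ² ∩ Ḣ¹` norm. -/
def H2tildeNorm (h : Space → ℝ) : ℝ :=
  (∫ x : Space, ‖iteratedFDeriv ℝ 2 h x‖ ^ 2) ^ ((1:ℝ)/2)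
    + (∫ x : Space, ‖gradient h x‖ ^ 2) ^ ((1:ℝ)/2)

/-- The inhomogeneous `H¹` norm. -/
def H1Norm (h : Space → ℝ) : ℝ :=
  (∫ x : Space, (h x) ^ 2) ^ ((1:ℝ)/2)
    + (∫ x : Space, ‖gradient h x‖ ^ 2) ^ ((1:ℝ)/2)

/-- Spatial `L^r` norm restricted to the interior of the light cone at time `t`,
i.e. the norm of `h · 1_{|x| < t}`. -/
def LxConeNorm (r t : ℝ) (h : Space → ℝ) : ℝ :=
  (∫ x in Metric.ball (0:Space) t, |h x| ^ r) ^ (1 / r)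

/-- Mixed norm `L^q_t L^r_x (Γ₊(J))` on the truncated forward light cone. -/
def LtLxConeNorm (q r : ℝ) (J : Set ℝ) (u : ℝ → Space → ℝ) : ℝ :=
  (∫ t in J, (LxConeNorm r t (u t)) ^ q) ^ (1 / q)

/-- The local energy `e(t)` (integral over the ball `|x| ≤ t`). -/
def locEnergy (c : ℝ) (u : ℝ → Space → ℝ) (t : ℝ) : ℝ :=
  (1/2) * (∫ x in Metric.closedBall (0:Space) t, (dt1 u t x) ^ 2)
    + (1/2) * (∫ x in Metric.closedBall (0:Space) t, ‖gradient (u t) x‖ ^ 2)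
    + ∫ x in Metric.closedBall (0:Space) t, Fpot c (u t x)

/-!
The Kirchhoff mean of a free wave, with data at time `s`, over the sphere of radius `t - s` about
`x` does not depend on `s`: up to a constant it is the value of the wave at `(t, x)`. Hence
`v₂ t x - v₁ t x` is the change of the Kirchhoff mean of `u` between the two ends of the interval,
which is the integral of `-(t - s) f(u)` over the part of the light cone through `(t, x)` between
them. Young's inequality `|u|⁵ |t - s| ≤ l (t - s)² u⁶ + l⁻⁵ (t - s)⁻⁴` bounds it by `l` times a
multiple of the energy flux through the cone, which is at most `E`, plus a multiple of
`l⁻⁵ d⁻³ sup g(u)`, where `d` is the distance of `t` from the interval; optimising over `l` gives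
`E ^ (5/6) (sup g(u)) ^ (1/6) d ^ (-1/2)`. By Sobolev embedding `|u| ≤ 1 + M²`, and as `g` varies so
slowly, `sup g(u)` is at most a multiple of `g(M)`.
-/

open Filter Metric Topology
open scoped RealInnerProductSpace

section ParametricIntegral

variable {α F : Type*} [TopologicalSpace α] [T2Space α] [MeasurableSpace α]
  [OpensMeasurableSpace α] {μ : Measure α} {K : Set α} [NormedAddCommGroup F]

theorem aestronglyMeasurable_of_continuousOn_prod {X : Type*} [TopologicalSpace X] {J : Set X}
    (hK : IsCompact K) (hμK : ∀ᵐ z ∂μ, z ∈ K) {k : X → α → F}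
    (hk : ContinuousOn (Function.uncurry k) (J ×ˢ K)) {s : X} (hs : s ∈ J) :
    AEStronglyMeasurable (k s) μ := by
  rw [← Measure.restrict_eq_self_of_ae_mem hμK]
  exact (hk.comp (f := fun z => (s, z)) (by fun_prop)
    fun z hz => ⟨hs, hz⟩).aestronglyMeasurable_of_isCompact hK hK.measurableSet

variable [IsFiniteMeasure μ] [NormedSpace ℝ F]

theorem continuousOn_integral_of_continuousOn_prod {X : Type*} [TopologicalSpace X]
    [FirstCountableTopology X] {J : Set X} (hJ : IsCompact J) (hK : IsCompact K)
    (hμK : ∀ᵐ z ∂μ, z ∈ K) {k : X → α → F} (hk : ContinuousOn (Function.uncurry k) (J ×ˢ K)) :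
    ContinuousOn (fun s => ∫ z, k s z ∂μ) J := by
  obtain ⟨B, hB⟩ := (hJ.prod hK).exists_bound_of_continuousOn hk
  refine continuousOn_of_dominated (bound := fun _ => B)
    (fun s hs => aestronglyMeasurable_of_continuousOn_prod hK hμK hk hs) ?_
    (integrable_const _) ?_
  · exact fun s hs => hμK.mono fun z hz => hB (s, z) ⟨hs, hz⟩
  · exact hμK.mono fun z hz => hk.comp (f := fun s => (s, z)) (by fun_prop) fun s hs => ⟨hs, hz⟩

theorem hasDerivAt_integral_of_continuousOn_prod (hK : IsCompact K) (hμK : ∀ᵐ z ∂μ, z ∈ K)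
    {I : Set ℝ} (hI : IsOpen I) {k k' : ℝ → α → F}
    (hk : ContinuousOn (Function.uncurry k) (I ×ˢ K))
    (hk' : ContinuousOn (Function.uncurry k') (I ×ˢ K))
    (hd : ∀ s ∈ I, ∀ z ∈ K, HasDerivAt (fun r => k r z) (k' s z) s) {s : ℝ} (hs : s ∈ I) :
    HasDerivAt (fun r => ∫ z, k r z ∂μ) (∫ z, k' s z ∂μ) s := by
  obtain ⟨δ, hδ, hsub⟩ := nhds_basis_closedBall.mem_iff.1 (hI.mem_nhds hs)
  obtain ⟨B, hB⟩ := ((isCompact_closedBall s δ).prod hK).exists_bound_of_continuousOn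
    (hk'.mono (prod_mono hsub Subset.rfl))
  obtain ⟨B₀, hB₀⟩ := ((isCompact_singleton (x := s)).prod hK).exists_bound_of_continuousOn
    (hk.mono (prod_mono (singleton_subset_iff.2 hs) Subset.rfl))
  have hmeas := fun r (hr : r ∈ I) => aestronglyMeasurable_of_continuousOn_prod hK hμK hk hr
  refine (hasDerivAt_integral_of_dominated_loc_of_deriv_le (F' := k') (bound := fun _ => B)
    (closedBall_mem_nhds s hδ) ?_ ?_ ?_ ?_ (integrable_const _) ?_).2
  · exact eventually_of_mem (hI.mem_nhds hs) hmeas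
  · exact .of_bound (hmeas s hs) B₀ (hμK.mono fun z hz => hB₀ (s, z) ⟨rfl, hz⟩)
  · exact aestronglyMeasurable_of_continuousOn_prod hK hμK hk' hs
  · exact hμK.mono fun z hz r hr => hB (r, z) ⟨hr, hz⟩
  · exact hμK.mono fun z hz r hr => hd r (hsub hr) z hz

end ParametricIntegral

theorem fderiv_inner_mul_apply {E : Type*} [NormedAddCommGroup E] [InnerProductSpace ℝ E]
    {k : E → ℝ} {y : E} (hk : DifferentiableAt ℝ k y) (e z : E) :
    fderiv ℝ (fun y => ⟪e, y⟫ * k y) y z = ⟪e, y⟫ * fderiv ℝ k y z + ⟪e, z⟫ * k y := by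
  have h := ((innerSL ℝ e).hasFDerivAt (x := y)).fun_mul hk.hasFDerivAt
  simpa [mul_comm (k y)] using congrArg (fun L : E →L[ℝ] ℝ => L z) h.fderiv

theorem fderiv_comp_add_smul_apply {V : Type*} [NormedAddCommGroup V] [NormedSpace ℝ V]
    {k : V → ℝ} (hk : Differentiable ℝ k) (x z v : V) (r : ℝ) :
    fderiv ℝ (fun z => k (x + r • z)) z v = r * fderiv ℝ k (x + r • z) v := by
  have h : HasFDerivAt (fun z => k (x + r • z)) _ z :=
    (hk (x + r • z)).hasFDerivAt.comp z (((hasFDerivAt_id z).const_smul r).const_add x)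
  simpa using congrArg (fun L : V →L[ℝ] ℝ => L v) h.fderiv

theorem eq_comp_homeomorphUnitSphereProd {E F : Type*} [NormedAddCommGroup E] [NormedSpace ℝ E]
    (k : E → F) (x : ({0}ᶜ : Set E)) :
    k x = k ((homeomorphUnitSphereProd E x).2.1 • (homeomorphUnitSphereProd E x).1.1) := by
  rw [← homeomorphUnitSphereProd_symm_apply_coe, Homeomorph.symm_apply_apply]

section Sphere

variable {E : Type*} [NormedAddCommGroup E] [InnerProductSpace ℝ E] [FiniteDimensional ℝ E]
  [MeasurableSpace E] [BorelSpace E]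

/-- The surface measure of the unit sphere of `E`. -/
abbrev sphereMeasure (E : Type*) [NormedAddCommGroup E] [InnerProductSpace ℝ E]
    [FiniteDimensional ℝ E] [MeasurableSpace E] [BorelSpace E] : Measure (sphere (0 : E) 1) :=
  (volume : Measure E).toSphere

/-- The restriction of a linear isometry to the unit sphere. -/
def sphereHomeomorph (L : E ≃ₗᵢ[ℝ] E) : sphere (0 : E) 1 ≃ₜ sphere (0 : E) 1 :=
  L.toHomeomorph.subtype (by simp)

open scoped Pointwise in
theorem measurePreserving_sphereHomeomorph (L : E ≃ₗᵢ[ℝ] E) :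
    MeasurePreserving (sphereHomeomorph L) (sphereMeasure E) (sphereMeasure E) := by
  have hval (w : sphere (0 : E) 1) : (sphereHomeomorph L w : E) = L w := rfl
  refine ⟨(sphereHomeomorph L).measurable, Measure.ext fun s hs => ?_⟩
  have hcone : L '' (Ioo (0 : ℝ) 1 • (Subtype.val '' (sphereHomeomorph L ⁻¹' s)) : Set E)
      = Ioo (0 : ℝ) 1 • (Subtype.val '' s) := by
    have himage : L '' (Subtype.val '' (sphereHomeomorph L ⁻¹' s)) = Subtype.val '' s := by
      conv_rhs => rw [← (sphereHomeomorph L).image_preimage s]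
      simp only [image_image, hval]
    rw [← himage]
    exact image_image2_distrib_right fun r y => L.map_smul r y
  rw [Measure.map_apply (sphereHomeomorph L).measurable hs, Measure.toSphere_apply' _ hs,
    Measure.toSphere_apply' _ ((sphereHomeomorph L).measurable hs), ← hcone,
    ← L.measurePreserving.measure_preimage_emb L.toHomeomorph.measurableEmbedding (L '' _),
    preimage_image_eq _ L.injective]

theorem integrable_sphereMeasure_of_continuous {F : Type*} [NormedAddCommGroup F]
    {k : sphere (0 : E) 1 → F} (hk : Continuous k) : Integrable k (sphereMeasure E) :=
  hk.integrable_of_hasCompactSupport (.of_compactSpace k)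

theorem integral_sphere_comp_linearIsometryEquiv {F : Type*} [NormedAddCommGroup F]
    [NormedSpace ℝ F] (L : E ≃ₗᵢ[ℝ] E) (k : E → F) :
    ∫ w : sphere (0 : E) 1, k (L w) ∂sphereMeasure E
      = ∫ w : sphere (0 : E) 1, k w ∂sphereMeasure E :=
  (measurePreserving_sphereHomeomorph L).integral_comp
    (sphereHomeomorph L).measurableEmbedding fun w => k w

theorem hasDerivAt_integral_sphere {I : Set ℝ} (hI : IsOpen I) {k k' : ℝ → sphere (0 : E) 1 → ℝ}
    (hk : ContinuousOn (Function.uncurry k) (I ×ˢ univ))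
    (hk' : ContinuousOn (Function.uncurry k') (I ×ˢ univ))
    (hd : ∀ s ∈ I, ∀ w, HasDerivAt (fun r => k r w) (k' s w) s) {s : ℝ} (hs : s ∈ I) :
    HasDerivAt (fun r => ∫ w, k r w ∂sphereMeasure E) (∫ w, k' s w ∂sphereMeasure E) s :=
  hasDerivAt_integral_of_continuousOn_prod isCompact_univ (ae_of_all _ mem_univ) hI hk hk'
    (fun s hs w _ => hd s hs w) hs

theorem hasDerivAt_integral_sphere_comp_clm {k : E → ℝ} (hk : ContDiff ℝ 1 k)
    {R R' : ℝ → E →L[ℝ] E} (hR : ∀ θ, HasDerivAt R (R' θ) θ) (hR' : Continuous R') (θ : ℝ) :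
    HasDerivAt (fun θ => ∫ w : sphere (0 : E) 1, k (R θ w) ∂sphereMeasure E)
      (∫ w : sphere (0 : E) 1, fderiv ℝ k (R θ w) (R' θ (w : E)) ∂sphereMeasure E) θ := by
  have hRc : Continuous R := continuous_iff_continuousAt.2 fun θ => (hR θ).continuousAt
  have hk₀ := hk.continuous
  have := hk.continuous_fderiv one_ne_zero
  refine hasDerivAt_integral_sphere isOpen_univ (k := fun θ w => k (R θ w))
    (k' := fun θ (w : sphere (0 : E) 1) => fderiv ℝ k (R θ w) (R' θ w))
    (Continuous.continuousOn ?_) (Continuous.continuousOn ?_) (fun θ _ w => ?_) (mem_univ _)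
  · unfold Function.uncurry
    fun_prop
  · unfold Function.uncurry
    fun_prop
  · have hRw : HasDerivAt (fun θ => R θ w) (R' θ w) θ := by
      simpa using (hR θ).clm_apply (hasDerivAt_const θ (w : E))
    exact ((hk.differentiable one_ne_zero) _).hasFDerivAt.comp_hasDerivAt θ hRw

theorem integral_sphere_comp_exp_skewAdjoint {A : E →L[ℝ] E}
    (hA : A ∈ skewAdjoint (E →L[ℝ] E)) (k : E → ℝ) :
    ∫ w : sphere (0 : E) 1, k (NormedSpace.exp A w) ∂sphereMeasure E
      = ∫ w : sphere (0 : E) 1, k w ∂sphereMeasure E := by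
  let := NormedAlgebra.restrictScalars ℚ ℝ (E →L[ℝ] E)
  let U : unitary (E →L[ℝ] E) := ⟨_, NormedSpace.exp_mem_unitary_of_mem_skewAdjoint hA⟩
  exact integral_sphere_comp_linearIsometryEquiv (Unitary.linearIsometryEquiv U) k

/-- A skew-adjoint field generates rotations, which preserve the integral over the sphere. -/
theorem integral_sphere_fderiv_skewAdjoint {k : E → ℝ} (hk : ContDiff ℝ 1 k) {A : E →L[ℝ] E}
    (hA : A ∈ skewAdjoint (E →L[ℝ] E)) :
    ∫ w : sphere (0 : E) 1, fderiv ℝ k w (A w) ∂sphereMeasure E = 0 := by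
  have hexp : ∀ θ : ℝ, HasDerivAt (fun θ : ℝ => NormedSpace.exp (θ • A))
      (A * NormedSpace.exp (θ • A)) θ := hasDerivAt_exp_smul_const' A
  have hcont : Continuous fun θ : ℝ => A * NormedSpace.exp (θ • A) :=
    continuous_const.mul (continuous_iff_continuousAt.2 fun θ => (hexp θ).continuousAt)
  have hderiv := hasDerivAt_integral_sphere_comp_clm hk hexp hcont 0
  simp only [integral_sphere_comp_exp_skewAdjoint (skewAdjoint.smul_mem _ hA) k] at hderiv
  simpa using hderiv.unique (hasDerivAt_const 0 _)

open InnerProductSpace in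
/-- Apply `integral_sphere_fderiv_skewAdjoint` to `y ↦ ⟪e, y⟫ k y` and the rotation field
`y ↦ ⟪e, y⟫ v - ⟪v, y⟫ e`, and sum over an orthonormal basis of vectors `e`. -/
theorem integral_sphere_tangential_fderiv {k : E → ℝ} (hk : ContDiff ℝ 1 k) (v : E) :
    ∫ w : sphere (0 : E) 1, (fderiv ℝ k w v - ⟪v, (w : E)⟫ * fderiv ℝ k w w
      - (Module.finrank ℝ E - 1) * ⟪v, (w : E)⟫ * k w) ∂sphereMeasure E = 0 := by
  let b := stdOrthonormalBasis ℝ E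
  let A i : E →L[ℝ] E := rankOne ℝ v (b i) - rankOne ℝ (b i) v
  have hA i : A i ∈ skewAdjoint (E →L[ℝ] E) := by
    simp [A, skewAdjoint.mem_iff, ContinuousLinearMap.star_eq_adjoint]
  have hbk i : ContDiff ℝ 1 fun y => ⟪b i, y⟫ * k y := (contDiff_const.inner ℝ contDiff_id).mul hk
  have hsum (w : sphere (0 : E) 1) : fderiv ℝ k w v - ⟪v, (w : E)⟫ * fderiv ℝ k w w
      - (Module.finrank ℝ E - 1) * ⟪v, (w : E)⟫ * k w
        = ∑ i, fderiv ℝ (fun y => ⟪b i, y⟫ * k y) w (A i w) := by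
    have hnorm : ∑ i, ⟪b i, (w : E)⟫ ^ 2 = 1 := by
      simpa using b.sum_sq_norm_inner_right (w : E)
    have hinner : ∑ i, ⟪b i, v⟫ * ⟪b i, (w : E)⟫ = ⟪v, (w : E)⟫ := by
      simpa only [real_inner_comm] using b.sum_inner_mul_inner v (w : E)
    have hdir : ∑ i, ⟪b i, (w : E)⟫ * fderiv ℝ k w (b i) = fderiv ℝ k w w := by
      simpa only [map_sum, map_smul, smul_eq_mul] using
        congrArg (fderiv ℝ k w) (b.sum_repr' (w : E))
    have hterm i : fderiv ℝ (fun y => ⟪b i, y⟫ * k y) w (A i w)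
        = ⟪b i, (w : E)⟫ ^ 2 * fderiv ℝ k w v - ⟪v, (w : E)⟫ * (⟪b i, (w : E)⟫ * fderiv ℝ k w (b i))
          + (⟪b i, v⟫ * ⟪b i, (w : E)⟫ - ⟪v, (w : E)⟫) * k w := by
      rw [fderiv_inner_mul_apply (hk.differentiable one_ne_zero _)]
      simp only [A, sub_apply, rankOne_apply, map_sub, map_smul, smul_eq_mul, inner_sub_right,
        real_inner_smul_right, real_inner_self_eq_norm_sq, b.norm_eq_one]
      ring
    simp only [hterm, Finset.sum_add_distrib, Finset.sum_sub_distrib, ← Finset.sum_mul,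
      ← Finset.mul_sum, hnorm, hinner, hdir, Finset.sum_const, Finset.card_univ, Fintype.card_fin,
      nsmul_eq_mul]
    ring
  simp only [hsum]
  rw [integral_finsetSum]
  · exact Finset.sum_eq_zero fun i _ => integral_sphere_fderiv_skewAdjoint (hbk i) (hA i)
  · intro i _
    refine integrable_sphereMeasure_of_continuous ?_
    have := (hbk i).continuous_fderiv one_ne_zero
    fun_prop

theorem integral_sphere_tangential_fderiv_add_smul {k : E → ℝ} (hk : ContDiff ℝ 1 k) (x v : E)
    (r : ℝ) :
    ∫ w : sphere (0 : E) 1, (r * fderiv ℝ k (x + r • (w : E)) v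
      - r * ⟪v, (w : E)⟫ * fderiv ℝ k (x + r • (w : E)) w
      - (Module.finrank ℝ E - 1) * ⟪v, (w : E)⟫ * k (x + r • (w : E))) ∂sphereMeasure E = 0 := by
  have h := integral_sphere_tangential_fderiv (k := fun z => k (x + r • z))
    (hk.comp (by fun_prop)) v
  simpa only [fderiv_comp_add_smul_apply (hk.differentiable one_ne_zero), mul_left_comm _ r,
    mul_assoc] using h

variable {F : Type*} [NormedAddCommGroup F]

theorem integrable_polar {k : E → F} (hk : Integrable k) :
    Integrable (fun p : sphere (0 : E) 1 × Ioi (0 : ℝ) => k ((p.2 : ℝ) • (p.1 : E)))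
      ((sphereMeasure E).prod (Measure.volumeIoiPow (Module.finrank ℝ E - 1))) := by
  refine ((volume : Measure E).measurePreserving_homeomorphUnitSphereProd.integrable_comp_emb
    (homeomorphUnitSphereProd E).measurableEmbedding).1 ?_
  exact ((integrableOn_iff_comap_subtypeVal (measurableSet_singleton 0).compl).1
    hk.integrableOn).congr (ae_of_all _ (eq_comp_homeomorphUnitSphereProd k))

variable [NormedSpace ℝ F]

theorem integral_polar [Nontrivial E] (k : E → F) :
    ∫ x, k x = ∫ p : sphere (0 : E) 1 × Ioi (0 : ℝ), k ((p.2 : ℝ) • (p.1 : E))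
      ∂((sphereMeasure E).prod (Measure.volumeIoiPow (Module.finrank ℝ E - 1))) := by
  rw [← (volume : Measure E).measurePreserving_homeomorphUnitSphereProd.integral_comp
    (homeomorphUnitSphereProd E).measurableEmbedding, ← integral_congr_ae
    (ae_of_all _ (eq_comp_homeomorphUnitSphereProd k)), integral_subtype_comap
    (measurableSet_singleton _).compl k, restrict_compl_singleton]

theorem integral_volumeIoiPow (n : ℕ) (q : ℝ → F) :
    ∫ r : Ioi (0 : ℝ), q r ∂(Measure.volumeIoiPow n) = ∫ r in Ioi (0 : ℝ), r ^ n • q r := by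
  simp only [Measure.volumeIoiPow, ENNReal.ofReal]
  rw [integral_withDensity_eq_integral_smul
      (measurable_subtype_coe.pow_const _).real_toNNReal,
    integral_subtype_comap measurableSet_Ioi fun a => Real.toNNReal (a ^ n) • q a]
  refine setIntegral_congr_fun measurableSet_Ioi fun r hr => ?_
  simp only [NNReal.smul_def, Real.coe_toNNReal _ (pow_nonneg hr.out.le n)]

theorem integrable_integral_ray {k : E → F} (hk : Integrable k) :
    Integrable (fun w : sphere (0 : E) 1 =>
      ∫ r in Ioi (0 : ℝ), r ^ (Module.finrank ℝ E - 1) • k (r • (w : E))) (sphereMeasure E) := by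
  have hray (w : sphere (0 : E) 1) := integral_volumeIoiPow (Module.finrank ℝ E - 1)
    fun r => k (r • (w : E))
  simpa only [hray] using (integrable_polar hk).integral_prod_left

theorem integral_eq_integral_sphere_integral_ray [Nontrivial E] {k : E → F} (hk : Integrable k) :
    ∫ x, k x = ∫ w : sphere (0 : E) 1,
      (∫ r in Ioi (0 : ℝ), r ^ (Module.finrank ℝ E - 1) • k (r • (w : E))) ∂sphereMeasure E := by
  rw [integral_polar, integral_prod _ (integrable_polar hk)]
  exact integral_congr_ae (ae_of_all _ fun w => integral_volumeIoiPow _ fun r => k (r • (w : E)))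

theorem integral_eq_integral_integral_sphere [Nontrivial E] {k : E → F} (hk : Integrable k) :
    ∫ x, k x = ∫ r in Ioi (0 : ℝ), r ^ (Module.finrank ℝ E - 1) •
      ∫ w : sphere (0 : E) 1, k (r • (w : E)) ∂sphereMeasure E := by
  rw [integral_polar, integral_prod_symm _ (integrable_polar hk)]
  exact integral_volumeIoiPow _ fun r => ∫ w : sphere (0 : E) 1, k (r • (w : E)) ∂sphereMeasure E

theorem setIntegral_closedBall_eq_integral_integral_sphere [Nontrivial E] {k : E → F} {R : ℝ}
    (hR : 0 ≤ R) (hk : IntegrableOn k (closedBall 0 R)) :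
    ∫ x in closedBall 0 R, k x = ∫ r in 0..R, r ^ (Module.finrank ℝ E - 1) •
      ∫ w : sphere (0 : E) 1, k (r • (w : E)) ∂sphereMeasure E := by
  have hray : ∀ r ∈ Ioi (0 : ℝ), r ^ (Module.finrank ℝ E - 1) • ∫ w : sphere (0 : E) 1,
      (closedBall 0 R).indicator k (r • (w : E)) ∂sphereMeasure E
        = (Iic R).indicator (fun r => r ^ (Module.finrank ℝ E - 1) •
          ∫ w : sphere (0 : E) 1, k (r • (w : E)) ∂sphereMeasure E) r := by
    intro r hr
    have hmem (w : sphere (0 : E) 1) : r • (w : E) ∈ closedBall (0 : E) R ↔ r ≤ R := by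
      simp [norm_smul, abs_of_pos hr.out]
    by_cases hrR : r ≤ R <;> simp [indicator, hmem, hrR]
  rw [← integral_indicator measurableSet_closedBall, integral_eq_integral_integral_sphere
    ((integrable_indicator_iff measurableSet_closedBall).2 hk),
    setIntegral_congr_fun measurableSet_Ioi hray, setIntegral_indicator measurableSet_Iic,
    Ioi_inter_Iic, intervalIntegral.integral_of_le hR]

theorem integral_sphere_inner (v : E) :
    ∫ w : sphere (0 : E) 1, ⟪v, (w : E)⟫ ∂sphereMeasure E = 0 := by
  have h := integral_sphere_comp_linearIsometryEquiv (LinearIsometryEquiv.neg ℝ) fun w : E => ⟪v, w⟫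
  simp only [LinearIsometryEquiv.coe_neg, inner_neg_right, integral_neg] at h
  linarith

theorem continuous_integral_sphere {X : Type*} [TopologicalSpace X] [FirstCountableTopology X]
    [LocallyCompactSpace X] {k : X → sphere (0 : E) 1 → F} (hk : Continuous (Function.uncurry k)) :
    Continuous fun s => ∫ w, k s w ∂sphereMeasure E := by
  simpa only [Measure.restrict_univ] using
    continuous_parametric_integral_of_continuous (μ := sphereMeasure E) hk isCompact_univ

theorem hasDerivAt_integral_sphere_inner_mul {k : E → ℝ} (hk : ContDiff ℝ 1 k) (v : E) (r : ℝ) :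
    HasDerivAt
      (fun r : ℝ => ∫ w : sphere (0 : E) 1, ⟪v, (w : E)⟫ * k (r • (w : E)) ∂sphereMeasure E)
      (∫ w : sphere (0 : E) 1, ⟪v, (w : E)⟫ * fderiv ℝ k (r • (w : E)) w ∂sphereMeasure E) r := by
  have hk₀ := hk.continuous
  have := hk.continuous_fderiv one_ne_zero
  refine hasDerivAt_integral_sphere isOpen_univ
    (k := fun r (w : sphere (0 : E) 1) => ⟪v, (w : E)⟫ * k (r • (w : E)))
    (k' := fun r (w : sphere (0 : E) 1) => ⟪v, (w : E)⟫ * fderiv ℝ k (r • (w : E)) w)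
    (Continuous.continuousOn ?_) (Continuous.continuousOn ?_) (fun r _ w => ?_) (mem_univ _)
  · unfold Function.uncurry
    fun_prop
  · unfold Function.uncurry
    fun_prop
  · have hline : HasDerivAt (fun r : ℝ => r • (w : E)) (w : E) r := by
      simpa using (hasDerivAt_id r).smul_const (w : E)
    exact ((hk.differentiable one_ne_zero _).hasFDerivAt.comp_hasDerivAt r hline).const_mul _

theorem mul_integral_sphere_fderiv {k : E → ℝ} (hk : ContDiff ℝ 1 k) (v : E) (r : ℝ) :
    r * ∫ w : sphere (0 : E) 1, fderiv ℝ k (r • (w : E)) v ∂sphereMeasure E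
      = r * (∫ w : sphere (0 : E) 1, ⟪v, (w : E)⟫ * fderiv ℝ k (r • (w : E)) w ∂sphereMeasure E)
        + (Module.finrank ℝ E - 1) *
          ∫ w : sphere (0 : E) 1, ⟪v, (w : E)⟫ * k (r • (w : E)) ∂sphereMeasure E := by
  have hk₀ := hk.continuous
  have := hk.continuous_fderiv one_ne_zero
  have htan := integral_sphere_tangential_fderiv_add_smul hk 0 v r
  simp only [zero_add, mul_assoc] at htan
  rw [integral_sub, integral_sub] at htan
  · simp only [integral_const_mul] at htan
    linarith
  all_goals exact integrable_sphereMeasure_of_continuous (by fun_prop)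

theorem hasDerivAt_pow_mul_integral_sphere [Nontrivial E] {k : E → ℝ} (hk : ContDiff ℝ 1 k) (v : E)
    {r : ℝ} (hr : r ≠ 0) :
    HasDerivAt (fun r : ℝ => r ^ (Module.finrank ℝ E - 1) *
        ∫ w : sphere (0 : E) 1, ⟪v, (w : E)⟫ * k (r • (w : E)) ∂sphereMeasure E)
      (r ^ (Module.finrank ℝ E - 1) *
        ∫ w : sphere (0 : E) 1, fderiv ℝ k (r • (w : E)) v ∂sphereMeasure E) r := by
  refine ((hasDerivAt_pow (Module.finrank ℝ E - 1) r).mul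
    (hasDerivAt_integral_sphere_inner_mul hk v r)).congr_deriv (mul_left_cancel₀ hr ?_)
  have htan := mul_integral_sphere_fderiv hk v r
  obtain ⟨m, hm⟩ := Nat.exists_eq_succ_of_ne_zero (Module.finrank_pos (R := ℝ) (M := E)).ne'
  have hpow : r * (m * r ^ (m - 1)) = m * r ^ m := by
    cases m <;> simp [pow_succ]; ring
  simp only [hm, Nat.succ_eq_add_one, Nat.add_sub_cancel, Nat.cast_add, Nat.cast_one,
    add_sub_cancel_right] at htan ⊢
  linear_combination (∫ w : sphere (0 : E) 1, ⟪v, (w : E)⟫ * k (r • (w : E)) ∂sphereMeasure E) *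
    hpow - r ^ m * htan

/-- The divergence theorem on the unit ball, for the field `k v`. -/
theorem setIntegral_closedBall_fderiv [Nontrivial E] {k : E → ℝ} (hk : ContDiff ℝ 1 k) (v : E) :
    ∫ z in closedBall (0 : E) 1, fderiv ℝ k z v
      = ∫ w : sphere (0 : E) 1, ⟪v, (w : E)⟫ * k w ∂sphereMeasure E := by
  have hk₀ := hk.continuous
  have := hk.continuous_fderiv one_ne_zero
  rw [setIntegral_closedBall_eq_integral_integral_sphere zero_le_one
    (Continuous.continuousOn (by fun_prop) |>.integrableOn_compact (isCompact_closedBall _ _))]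
  have hcont (q : ℝ → sphere (0 : E) 1 → ℝ) (hq : Continuous (Function.uncurry q)) :
      Continuous fun r => r ^ (Module.finrank ℝ E - 1) * ∫ w, q r w ∂sphereMeasure E :=
    (continuous_pow _).mul (continuous_integral_sphere hq)
  simp only [smul_eq_mul]
  rw [intervalIntegral.integral_eq_sub_of_hasDerivAt_of_le zero_le_one
    (hcont _ (by unfold Function.uncurry; fun_prop)).continuousOn
    (fun r hr => hasDerivAt_pow_mul_integral_sphere hk v hr.1.ne')
    ((hcont _ (by unfold Function.uncurry; fun_prop)).intervalIntegrable _ _)]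
  simp [integral_mul_const, integral_sphere_inner]

/-- The divergence theorem on the unit ball, for the radial field `z ↦ k z • z`. -/
theorem setIntegral_closedBall_finrank_mul_add_fderiv [Nontrivial E] {k : E → ℝ}
    (hk : ContDiff ℝ 1 k) :
    ∫ z in closedBall (0 : E) 1, (Module.finrank ℝ E * k z + fderiv ℝ k z z)
      = ∫ w : sphere (0 : E) 1, k w ∂sphereMeasure E := by
  let b := stdOrthonormalBasis ℝ E
  have hk₀ := hk.continuous
  have := hk.continuous_fderiv one_ne_zero
  have hdiv := Finset.sum_congr rfl fun i (_ : i ∈ Finset.univ) =>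
    setIntegral_closedBall_fderiv (k := fun z => ⟪b i, z⟫ * k z)
      ((contDiff_const.inner ℝ contDiff_id).mul hk) (b i)
  simp only [fderiv_inner_mul_apply (hk.differentiable one_ne_zero _)] at hdiv
  rw [← integral_finsetSum, ← integral_finsetSum] at hdiv
  · have hsq (w : sphere (0 : E) 1) : ∑ i, ⟪b i, (w : E)⟫ * ⟪b i, (w : E)⟫ = 1 := by
      simpa [sq] using b.sum_sq_norm_inner_right (w : E)
    have hdir (z : E) : ∑ i, ⟪b i, z⟫ * fderiv ℝ k z (b i) = fderiv ℝ k z z := by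
      simpa only [map_sum, map_smul, smul_eq_mul] using congrArg (fderiv ℝ k z) (b.sum_repr' z)
    simpa [← mul_assoc, ← Finset.sum_mul, hsq, Finset.sum_add_distrib, hdir,
      add_comm (fderiv ℝ k _ _), b.norm_eq_one] using hdiv
  · exact fun i _ => integrable_sphereMeasure_of_continuous (by fun_prop)
  · exact fun i _ => (Continuous.continuousOn (by fun_prop)).integrableOn_compact
      (isCompact_closedBall _ _)

end Sphere

section Slices

variable {V W : Type*} [NormedAddCommGroup V] [NormedSpace ℝ V] [NormedAddCommGroup W]
  [NormedSpace ℝ W] {J : Set ℝ} {u : ℝ → V → W} {s : ℝ}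

/-- The velocity `∂ₜu` on the time interval `J`. It is one-sided at the endpoints of `J`, where
`dt1` depends on the values of `u` outside `J`. -/
def velocityWithin (J : Set ℝ) (u : ℝ → V → W) (s : ℝ) (y : V) : W :=
  derivWithin (fun r => u r y) J s

theorem hasFDerivAt_slice (hu : DifferentiableOn ℝ (Function.uncurry u) (J ×ˢ univ)) (hs : s ∈ J)
    (y : V) :
    HasFDerivAt (u s) ((fderivWithin ℝ (Function.uncurry u) (J ×ˢ univ) (s, y)).comp
      (ContinuousLinearMap.inr ℝ ℝ V)) y :=
  (hu (s, y) ⟨hs, mem_univ _⟩).hasFDerivWithinAt.comp_hasFDerivAt_of_eq y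
    (hasFDerivAt_prodMk_right s y) (Eventually.of_forall fun _ => ⟨hs, mem_univ _⟩) rfl

theorem contDiff_slice {n : WithTop ℕ∞} (hu : ContDiffOn ℝ n (Function.uncurry u) (J ×ˢ univ))
    (hs : s ∈ J) : ContDiff ℝ n (u s) := by
  rw [← contDiffOn_univ]
  exact hu.comp (f := fun y => (s, y)) (by fun_prop) fun y _ => ⟨hs, mem_univ y⟩

theorem hasDerivWithinAt_slice (hu : DifferentiableOn ℝ (Function.uncurry u) (J ×ˢ univ))
    (hs : s ∈ J) (y : V) :
    HasDerivWithinAt (fun r => u r y)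
      (fderivWithin ℝ (Function.uncurry u) (J ×ˢ univ) (s, y) (1, 0)) J s :=
  (hu (s, y) ⟨hs, mem_univ _⟩).hasFDerivWithinAt.comp_hasDerivWithinAt_of_eq s
    ((hasDerivWithinAt_id s J).prodMk (hasDerivWithinAt_const s J y))
    (fun _ hr => ⟨hr, mem_univ _⟩) rfl

theorem fderiv_fderiv_apply {h : V → ℝ} (hh : ContDiff ℝ 2 h) (y v w : V) :
    fderiv ℝ (fun z => fderiv ℝ h z v) y w = fderiv ℝ (fderiv ℝ h) y w v := by
  rw [fderiv_clm_apply ((hh.fderiv_right (m := 1) le_rfl).differentiable one_ne_zero y)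
    (differentiableAt_const v)]
  simp

variable {m n : WithTop ℕ∞}

theorem contDiffOn_velocityWithin (hJ : UniqueDiffOn ℝ J)
    (hu : ContDiffOn ℝ n (Function.uncurry u) (J ×ˢ univ)) (hmn : m + 1 ≤ n) :
    ContDiffOn ℝ m (Function.uncurry (velocityWithin J u)) (J ×ˢ univ) := by
  refine ((hu.fderivWithin (hJ.prod uniqueDiffOn_univ) hmn).clm_apply
    (contDiffOn_const (c := ((1 : ℝ), (0 : V))))).congr fun p hp => ?_
  have hd := hu.differentiableOn (one_ne_zero.bot_lt.trans_le (le_add_self.trans hmn)).ne'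
  exact (hasDerivWithinAt_slice hd hp.1 p.2).derivWithin (hJ p.1 hp.1)

theorem contDiffOn_fderiv_slice (hJ : UniqueDiffOn ℝ J)
    (hu : ContDiffOn ℝ n (Function.uncurry u) (J ×ˢ univ)) (hmn : m + 1 ≤ n) :
    ContDiffOn ℝ m (Function.uncurry fun s => fderiv ℝ (u s)) (J ×ˢ univ) := by
  refine ((hu.fderivWithin (hJ.prod uniqueDiffOn_univ) hmn).clm_comp
    (contDiffOn_const (c := ContinuousLinearMap.inr ℝ ℝ V))).congr fun p hp => ?_
  have hd := hu.differentiableOn (one_ne_zero.bot_lt.trans_le (le_add_self.trans hmn)).ne'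
  exact (hasFDerivAt_slice hd hp.1 p.2).fderiv

end Slices

section OpenSlices

variable {I : Set ℝ} {u : ℝ → Space → ℝ} {s : ℝ}

theorem hasFDerivAt_uncurry (hI : IsOpen I)
    (hu : DifferentiableOn ℝ (Function.uncurry u) (I ×ˢ univ)) (hs : s ∈ I) (y : Space) :
    HasFDerivAt (Function.uncurry u) (fderiv ℝ (Function.uncurry u) (s, y)) (s, y) :=
  (hu.differentiableAt ((hI.prod isOpen_univ).mem_nhds ⟨hs, mem_univ y⟩)).hasFDerivAt

theorem fderiv_slice_apply (hI : IsOpen I)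
    (hu : DifferentiableOn ℝ (Function.uncurry u) (I ×ˢ univ)) (hs : s ∈ I) (y v : Space) :
    fderiv ℝ (u s) y v = fderiv ℝ (Function.uncurry u) (s, y) (0, v) := by
  rw [(hasFDerivAt_slice hu hs y).fderiv,
    fderivWithin_of_isOpen (hI.prod isOpen_univ) ⟨hs, mem_univ y⟩]
  simp

theorem dt1_eq_fderiv_uncurry (hI : IsOpen I)
    (hu : DifferentiableOn ℝ (Function.uncurry u) (I ×ˢ univ)) (hs : s ∈ I) (y : Space) :
    dt1 u s y = fderiv ℝ (Function.uncurry u) (s, y) (1, 0) := by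
  rw [← fderivWithin_of_isOpen (hI.prod isOpen_univ) ⟨hs, mem_univ y⟩]
  exact ((hasDerivWithinAt_slice hu hs y).hasDerivAt (hI.mem_nhds hs)).deriv

theorem hasDerivAt_fderiv_uncurry_comp (hI : IsOpen I)
    (hu : ContDiffOn ℝ 2 (Function.uncurry u) (I ×ˢ univ)) (hs : s ∈ I) {γ : ℝ → ℝ × Space}
    {γ' : ℝ × Space} {θ : ℝ} {y : Space} (hγ : HasDerivAt γ γ' θ) (hγθ : γ θ = (s, y)) :
    HasDerivAt (fun θ => fderiv ℝ (Function.uncurry u) (γ θ))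
      (fderiv ℝ (fderiv ℝ (Function.uncurry u)) (s, y) γ') θ :=
  (((hu.contDiffAt ((hI.prod isOpen_univ).mem_nhds ⟨hs, mem_univ y⟩)).fderiv_right
    (m := 1) le_rfl).differentiableAt one_ne_zero).hasFDerivAt.comp_hasDerivAt_of_eq θ hγ hγθ.symm

theorem dt2_eq_fderiv_fderiv_uncurry (hI : IsOpen I)
    (hu : ContDiffOn ℝ 2 (Function.uncurry u) (I ×ˢ univ)) (hs : s ∈ I) (y : Space) :
    dt2 u s y = fderiv ℝ (fderiv ℝ (Function.uncurry u)) (s, y) (1, 0) (1, 0) := by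
  have hline : HasDerivAt (fun r : ℝ => (r, y)) (1, 0) s :=
    (hasDerivAt_id s).prodMk (hasDerivAt_const s y)
  have h := (hasDerivAt_fderiv_uncurry_comp hI hu hs hline rfl).clm_apply
    (hasDerivAt_const s ((1 : ℝ), (0 : Space)))
  rw [map_zero, add_zero] at h
  refine (h.congr_of_eventuallyEq ?_).deriv
  filter_upwards [hI.mem_nhds hs] with r hr
  exact dt1_eq_fderiv_uncurry hI (hu.differentiableOn two_ne_zero) hr y

theorem hasFDerivAt_fderiv_uncurry_slice (hI : IsOpen I)
    (hu : ContDiffOn ℝ 2 (Function.uncurry u) (I ×ˢ univ)) (hs : s ∈ I) (y : Space)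
    (q : ℝ × Space) :
    HasFDerivAt (fun z => fderiv ℝ (Function.uncurry u) (s, z) q)
      (((fderiv ℝ (fderiv ℝ (Function.uncurry u)) (s, y)).comp
        (ContinuousLinearMap.inr ℝ ℝ Space)).flip q) y := by
  have hD : DifferentiableAt ℝ (fderiv ℝ (Function.uncurry u)) (s, y) :=
    ((hu.contDiffAt ((hI.prod isOpen_univ).mem_nhds ⟨hs, mem_univ y⟩)).fderiv_right
      (m := 1) le_rfl).differentiableAt one_ne_zero
  refine ((hD.hasFDerivAt.comp y (hasFDerivAt_prodMk_right s y)).clm_apply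
    (hasFDerivAt_const q y)).congr_fderiv ?_
  ext
  simp

theorem fderiv_fderiv_slice_apply (hI : IsOpen I)
    (hu : ContDiffOn ℝ 2 (Function.uncurry u) (I ×ˢ univ)) (hs : s ∈ I) (y v w : Space) :
    fderiv ℝ (fderiv ℝ (u s)) y v w
      = fderiv ℝ (fderiv ℝ (Function.uncurry u)) (s, y) (0, v) (0, w) := by
  rw [← fderiv_fderiv_apply (contDiff_slice hu hs)]
  simp only [fderiv_slice_apply hI (hu.differentiableOn two_ne_zero) hs,
    (hasFDerivAt_fderiv_uncurry_slice hI hu hs y (0, w)).fderiv]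
  rfl

theorem fderiv_dt1_apply (hI : IsOpen I)
    (hu : ContDiffOn ℝ 2 (Function.uncurry u) (I ×ˢ univ)) (hs : s ∈ I) (y v : Space) :
    fderiv ℝ (dt1 u s) y v
      = fderiv ℝ (fderiv ℝ (Function.uncurry u)) (s, y) (0, v) (1, 0) := by
  have hdt1 : dt1 u s = fun z => fderiv ℝ (Function.uncurry u) (s, z) (1, 0) :=
    funext (dt1_eq_fderiv_uncurry hI (hu.differentiableOn two_ne_zero) hs)
  rw [hdt1, (hasFDerivAt_fderiv_uncurry_slice hI hu hs y (1, 0)).fderiv]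
  rfl

theorem isSymmSndFDerivAt_uncurry (hI : IsOpen I)
    (hu : ContDiffOn ℝ 2 (Function.uncurry u) (I ×ˢ univ)) (hs : s ∈ I) (y : Space) :
    IsSymmSndFDerivAt ℝ (Function.uncurry u) (s, y) :=
  (hu.contDiffAt ((hI.prod isOpen_univ).mem_nhds ⟨hs, mem_univ y⟩)).isSymmSndFDerivAt (by simp)

theorem velocityWithin_of_mem_nhds {J : Set ℝ} (hJ : J ∈ 𝓝 s) :
    velocityWithin J u s = dt1 u s :=
  funext fun _ => derivWithin_of_mem_nhds hJ

theorem contDiffOn_dt1 {m n : WithTop ℕ∞} (hI : IsOpen I)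
    (hu : ContDiffOn ℝ n (Function.uncurry u) (I ×ˢ univ)) (hmn : m + 1 ≤ n) :
    ContDiffOn ℝ m (Function.uncurry (dt1 u)) (I ×ˢ univ) :=
  (contDiffOn_velocityWithin hI.uniqueDiffOn hu hmn).congr fun p hp =>
    congrFun (velocityWithin_of_mem_nhds (hI.mem_nhds hp.1)).symm p.2

theorem continuousOn_dt2 (hI : IsOpen I)
    (hu : ContDiffOn ℝ 2 (Function.uncurry u) (I ×ˢ univ)) :
    ContinuousOn (Function.uncurry (dt2 u)) (I ×ˢ univ) :=
  (contDiffOn_dt1 hI (contDiffOn_dt1 hI hu (m := 1) le_rfl) (m := 0) le_rfl).continuousOn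

theorem continuousOn_fderiv_fderiv_slice (hI : IsOpen I)
    (hu : ContDiffOn ℝ 2 (Function.uncurry u) (I ×ˢ univ)) :
    ContinuousOn (Function.uncurry fun s => fderiv ℝ (fderiv ℝ (u s))) (I ×ˢ univ) :=
  (contDiffOn_fderiv_slice hI.uniqueDiffOn
    (contDiffOn_fderiv_slice hI.uniqueDiffOn hu (m := 1) le_rfl) (m := 0) le_rfl).continuousOn

end OpenSlices

section Kirchhoff

/-- The integral over the unit sphere whose value at `h = v s`, `k = ∂ₜv s`, `r = t - s` is, up to
the area of the sphere, Kirchhoff's formula for a free wave `v` at `(t, x)` with data at time `s`.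
-/
def kirchhoffMean (h k : Space → ℝ) (x : Space) (r : ℝ) : ℝ :=
  ∫ w : sphere (0 : Space) 1, (h (x + r • (w : Space))
    + r * (fderiv ℝ h (x + r • (w : Space)) w + k (x + r • (w : Space)))) ∂sphereMeasure Space

theorem sum_mul_apply_single {ι : Type*} [Fintype ι] [DecidableEq ι]
    (L : EuclideanSpace ℝ ι →L[ℝ] ℝ) (w : EuclideanSpace ℝ ι) :
    ∑ i, w i * L (EuclideanSpace.single i 1) = L w := by
  simpa using congrArg L ((EuclideanSpace.basisFun ι ℝ).sum_repr w)

theorem integral_sphere_fderiv_fderiv_single {h : Space → ℝ} (hh : ContDiff ℝ 2 h) (x : Space)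
    (r : ℝ) (i : Fin 3) :
    ∫ w : sphere (0 : Space) 1,
        (2 * ((w : Space) i * fderiv ℝ h (x + r • (w : Space)) (EuclideanSpace.single i 1))
          + r * ((w : Space) i * fderiv ℝ (fderiv ℝ h) (x + r • (w : Space)) w
            (EuclideanSpace.single i 1))) ∂sphereMeasure Space
      = ∫ w : sphere (0 : Space) 1, r * fderiv ℝ (fderiv ℝ h) (x + r • (w : Space))
          (EuclideanSpace.single i 1) (EuclideanSpace.single i 1) ∂sphereMeasure Space := by
  have hD : ContDiff ℝ 1 (fderiv ℝ h) := hh.fderiv_right le_rfl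
  have hD₀ := hD.continuous
  have := hD.continuous_fderiv one_ne_zero
  have htan := integral_sphere_tangential_fderiv_add_smul
    (k := fun z => fderiv ℝ h z (EuclideanSpace.single i 1)) (hD.clm_apply contDiff_const) x
    (EuclideanSpace.single i 1) r
  simp only [fderiv_fderiv_apply hh] at htan
  rw [eq_comm, ← sub_eq_zero, ← integral_sub, ← htan]
  · refine integral_congr_ae (ae_of_all _ fun w => ?_)
    simp only [EuclideanSpace.inner_single_left, finrank_euclideanSpace_fin, map_one]
    ring
  all_goals exact integrable_sphereMeasure_of_continuous (by fun_prop)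

theorem continuous_lap {h : Space → ℝ} (hh : ContDiff ℝ 2 h) : Continuous (lap h) := by
  have := (hh.fderiv_right (m := 1) le_rfl).continuous_fderiv one_ne_zero
  unfold lap
  simp only [fderiv_fderiv_apply hh]
  fun_prop

/-- The sum over `i` of `integral_sphere_tangential_fderiv_add_smul` for the `i`-th partial
derivative of `h` in the direction of the `i`-th coordinate. -/
theorem integral_sphere_lap {h : Space → ℝ} (hh : ContDiff ℝ 2 h) (x : Space) (r : ℝ) :
    ∫ w : sphere (0 : Space) 1, (2 * fderiv ℝ h (x + r • (w : Space)) w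
      + r * fderiv ℝ (fderiv ℝ h) (x + r • (w : Space)) w w) ∂sphereMeasure Space
      = r * ∫ w : sphere (0 : Space) 1, lap h (x + r • (w : Space)) ∂sphereMeasure Space := by
  have hD : ContDiff ℝ 1 (fderiv ℝ h) := hh.fderiv_right le_rfl
  have hD₀ := hD.continuous
  have := hD.continuous_fderiv one_ne_zero
  have hsum := Finset.sum_congr rfl fun i (_ : i ∈ Finset.univ) =>
    integral_sphere_fderiv_fderiv_single hh x r i
  rw [← integral_finsetSum, ← integral_finsetSum] at hsum
  · simpa only [Finset.sum_add_distrib, ← Finset.mul_sum, sum_mul_apply_single, lap,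
      fderiv_fderiv_apply hh, integral_const_mul] using hsum
  all_goals exact fun i _ => integrable_sphereMeasure_of_continuous (by fun_prop)

variable {I : Set ℝ} {u : ℝ → Space → ℝ} {s : ℝ}

theorem hasDerivAt_backwardCone (t σ : ℝ) (x z : Space) :
    HasDerivAt (fun σ => (σ, x + (t - σ) • z)) (1, -z) σ := by
  simpa using (hasDerivAt_id σ).prodMk
    ((((hasDerivAt_id σ).const_sub t).smul_const z).const_add x)

theorem hasDerivAt_kirchhoff_integrand (hI : IsOpen I)
    (hu : ContDiffOn ℝ 2 (Function.uncurry u) (I ×ˢ univ)) (hs : s ∈ I) (t : ℝ) (x w : Space) :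
    HasDerivAt (fun σ => u σ (x + (t - σ) • w) + (t - σ)
        * (fderiv ℝ (u σ) (x + (t - σ) • w) w + dt1 u σ (x + (t - σ) • w)))
      ((t - s) * dt2 u s (x + (t - s) • w) - (2 * fderiv ℝ (u s) (x + (t - s) • w) w
        + (t - s) * fderiv ℝ (fderiv ℝ (u s)) (x + (t - s) • w) w w)) s := by
  have hd := hu.differentiableOn two_ne_zero
  have hγ := hasDerivAt_backwardCone t s x w
  have hU := (hasFDerivAt_uncurry hI hd hs _).comp_hasDerivAt s hγ
  have hD := (hasDerivAt_fderiv_uncurry_comp hI hu hs hγ rfl).clm_apply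
    (hasDerivAt_const s ((1 : ℝ), w))
  have h := hU.add (((hasDerivAt_id s).const_sub t).mul hD)
  have hsplit (L : ℝ × Space →L[ℝ] ℝ) : L (1, w) = L (0, w) + L (1, 0) := by simp [← map_add]
  refine (h.congr_of_eventuallyEq ?_).congr_deriv ?_
  · filter_upwards [hI.mem_nhds hs] with σ hσ
    simp [hsplit, fderiv_slice_apply hI hd hσ, dt1_eq_fderiv_uncurry hI hd hσ]
  · have hsymm := isSymmSndFDerivAt_uncurry hI hu hs (x + (t - s) • w) (1, 0) (0, w)
    have hsplit' (L : ℝ × Space →L[ℝ] ℝ) : L (1, -w) = L (1, 0) - L (0, w) := by simp [← map_sub]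
    have hsplit₂ (L : ℝ × Space →L[ℝ] ℝ × Space →L[ℝ] ℝ) :
        L (1, -w) = L (1, 0) - L (0, w) := by simp [← map_sub]
    simp only [fderiv_slice_apply hI hd hs, dt2_eq_fderiv_fderiv_uncurry hI hu hs,
      fderiv_fderiv_slice_apply hI hu hs, hsplit, hsplit', hsplit₂, sub_apply, hsymm, map_zero,
      neg_mul, one_mul, neg_add_rev, id_eq, sub_add_sub_cancel', add_zero]
    ring

theorem continuousOn_comp_backwardCone {Z β : Type*} [TopologicalSpace Z] [TopologicalSpace β]
    {J : Set ℝ} {q : ℝ × Space → β} (hq : ContinuousOn q (J ×ˢ univ)) {ι : Z → Space}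
    (hι : Continuous ι) (t : ℝ) (x : Space) (S : Set Z) :
    ContinuousOn (fun p : ℝ × Z => q (p.1, x + (t - p.1) • ι p.2)) (J ×ˢ S) :=
  hq.comp (by fun_prop) fun _ hp => ⟨hp.1, mem_univ _⟩

theorem hasDerivAt_kirchhoffMean (hI : IsOpen I)
    (hu : ContDiffOn ℝ 2 (Function.uncurry u) (I ×ˢ univ)) (hs : s ∈ I) (t : ℝ) (x : Space) :
    HasDerivAt (fun σ => kirchhoffMean (u σ) (dt1 u σ) x (t - σ))
      ((t - s) * ∫ w : sphere (0 : Space) 1, (dt2 u s (x + (t - s) • (w : Space))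
        - lap (u s) (x + (t - s) • (w : Space))) ∂sphereMeasure Space) s := by
  have hcone {β : Type} [TopologicalSpace β] {q : ℝ × Space → β}
      (hq : ContinuousOn q (I ×ˢ univ)) := continuousOn_comp_backwardCone hq
    (ι := ((↑) : sphere (0 : Space) 1 → Space)) continuous_subtype_val t x univ
  have hU := hcone hu.continuousOn
  have hDU := hcone (contDiffOn_fderiv_slice hI.uniqueDiffOn hu (m := 1) le_rfl).continuousOn
  have hDDU := hcone (continuousOn_fderiv_fderiv_slice hI hu)
  have hdt1 := hcone (contDiffOn_dt1 hI hu (m := 1) le_rfl).continuousOn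
  have hdt2 := hcone (continuousOn_dt2 hI hu)
  have hr : ContinuousOn (fun p : ℝ × sphere (0 : Space) 1 => t - p.1) (I ×ˢ univ) := by fun_prop
  have hw : ContinuousOn (fun p : ℝ × sphere (0 : Space) 1 => (p.2 : Space)) (I ×ˢ univ) := by
    fun_prop
  have hh := contDiff_slice hu hs
  have hD : Continuous (fderiv ℝ (u s)) := hh.continuous_fderiv two_ne_zero
  have := (hh.fderiv_right (m := 1) le_rfl).continuous_fderiv one_ne_zero
  have hlap := continuous_lap hh
  have hdt2_s : Continuous (dt2 u s) :=
    (contDiff_slice (contDiffOn_zero.2 (continuousOn_dt2 hI hu)) hs).continuous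
  refine (hasDerivAt_integral_sphere (E := Space) hI ?_ ?_
    (fun σ hσ w => hasDerivAt_kirchhoff_integrand hI hu hσ t x (w : Space)) hs).congr_deriv ?_
  · exact hU.add (hr.mul ((hDU.clm_apply hw).add hdt1))
  · exact (hr.mul hdt2).sub ((continuousOn_const.mul (hDU.clm_apply hw)).add
      (hr.mul ((hDDU.clm_apply hw).clm_apply hw)))
  · rw [integral_sub, integral_sphere_lap hh, integral_sub, integral_const_mul, mul_sub]
    all_goals exact integrable_sphereMeasure_of_continuous (by fun_prop)

theorem continuousOn_kirchhoffMean {J : Set ℝ} (hJ : UniqueDiffOn ℝ J) (hJc : IsCompact J)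
    (hu : ContDiffOn ℝ 1 (Function.uncurry u) (J ×ˢ univ)) (t : ℝ) (x : Space) :
    ContinuousOn (fun σ => kirchhoffMean (u σ) (velocityWithin J u σ) x (t - σ)) J := by
  have hcone {β : Type} [TopologicalSpace β] {q : ℝ × Space → β}
      (hq : ContinuousOn q (J ×ˢ univ)) := continuousOn_comp_backwardCone hq
    (ι := ((↑) : sphere (0 : Space) 1 → Space)) continuous_subtype_val t x univ
  have hD := hcone (contDiffOn_fderiv_slice hJ hu (m := 0) le_rfl).continuousOn
  have hV := hcone (contDiffOn_velocityWithin hJ hu (m := 0) le_rfl).continuousOn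
  refine continuousOn_integral_of_continuousOn_prod hJc isCompact_univ (ae_of_all _ mem_univ)
    ((hcone hu.continuousOn).add (ContinuousOn.mul ?_ ((hD.clm_apply ?_).add hV)))
  all_goals fun_prop

theorem kirchhoffMean_eq_of_free_wave {v : ℝ → Space → ℝ} (hv : ContDiff ℝ 2 (Function.uncurry v))
    (hwave : ∀ s x, dt2 v s x - lap (v s) x = 0) (T t : ℝ) (x : Space) :
    kirchhoffMean (v T) (dt1 v T) x (t - T) = (sphereMeasure Space).real univ * v t x := by
  have hderiv (s : ℝ) := hasDerivAt_kirchhoffMean isOpen_univ hv.contDiffOn (mem_univ s) t x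
  simp only [hwave, integral_zero, mul_zero] at hderiv
  rw [is_const_of_deriv_eq_zero (fun s => (hderiv s).differentiableAt) (fun s => (hderiv s).deriv)
    T t]
  simp [kirchhoffMean]

end Kirchhoff

section ConeFlux

theorem setIntegral_closedBall_sum_fderiv_sub {e : Space → ℝ} {X : Fin 3 → Space → ℝ}
    (he : ContDiff ℝ 1 e) (hX : ∀ i, ContDiff ℝ 1 (X i)) (x : Space) (r : ℝ) :
    ∫ z in closedBall (0 : Space) 1,
        (r * ∑ i, fderiv ℝ (X i) (x + r • z) (EuclideanSpace.single i 1)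
          - (3 * e (x + r • z) + r * fderiv ℝ e (x + r • z) z))
      = ∫ w : sphere (0 : Space) 1, (∑ i, (w : Space) i * X i (x + r • (w : Space))
          - e (x + r • (w : Space))) ∂sphereMeasure Space := by
  have he₀ := he.continuous
  have := he.continuous_fderiv one_ne_zero
  have hX₀ i := (hX i).continuous
  have := fun i => (hX i).continuous_fderiv one_ne_zero
  have hint {k : Space → ℝ} (hk : Continuous k) : IntegrableOn k (closedBall 0 1) :=
    hk.continuousOn.integrableOn_compact (isCompact_closedBall _ _)
  have hdiv := Finset.sum_congr rfl fun i (_ : i ∈ Finset.univ) =>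
    setIntegral_closedBall_fderiv (k := fun z => X i (x + r • z)) ((hX i).comp (by fun_prop))
      (EuclideanSpace.single i 1)
  have hrad := setIntegral_closedBall_finrank_mul_add_fderiv (k := fun z => e (x + r • z))
    (he.comp (by fun_prop))
  simp only [fderiv_comp_add_smul_apply ((hX _).differentiable one_ne_zero),
    fderiv_comp_add_smul_apply (he.differentiable one_ne_zero), finrank_euclideanSpace_fin,
    EuclideanSpace.inner_single_left, map_one, one_mul, Nat.cast_ofNat] at hdiv hrad
  rw [← integral_finsetSum _ fun i _ => hint (by fun_prop), ← integral_finsetSum _ fun i _ =>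
    integrable_sphereMeasure_of_continuous (by fun_prop)] at hdiv
  simp only [← Finset.mul_sum] at hdiv
  rw [integral_sub (hint (by fun_prop)) (hint (by fun_prop)), hdiv, hrad, integral_sub]
  all_goals exact integrable_sphereMeasure_of_continuous (by fun_prop)

theorem hasDerivAt_pow_mul_comp_backwardCone {I : Set ℝ} (hI : IsOpen I) {e : ℝ → Space → ℝ}
    (he : DifferentiableOn ℝ (Function.uncurry e) (I ×ˢ univ)) {s : ℝ} (hs : s ∈ I) (t : ℝ)
    (x z : Space) :
    HasDerivAt (fun σ => (t - σ) ^ 3 * e σ (x + (t - σ) • z))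
      ((t - s) ^ 2 * ((t - s) * dt1 e s (x + (t - s) • z) - (3 * e s (x + (t - s) • z)
        + (t - s) * fderiv ℝ (e s) (x + (t - s) • z) z))) s := by
  have hcomp := (hasFDerivAt_uncurry hI he hs (x + (t - s) • z)).comp_hasDerivAt s
    (hasDerivAt_backwardCone t s x z)
  refine ((((hasDerivAt_id s).const_sub t).fun_pow 3).fun_mul hcomp).congr_deriv ?_
  have hsplit : ((1 : ℝ), -z) = (1, 0) - (0, z) := by simp
  rw [hsplit, map_sub, fderiv_slice_apply hI he hs, dt1_eq_fderiv_uncurry hI he hs]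
  simp only [id, Function.uncurry_apply_pair, Function.comp_apply]
  push_cast
  ring

/-- A density `e` with `∂ₜe = div X` changes inside a shrinking ball only through its boundary. -/
theorem hasDerivAt_setIntegral_backwardCone {I : Set ℝ} (hI : IsOpen I) {e : ℝ → Space → ℝ}
    (he : ContDiffOn ℝ 1 (Function.uncurry e) (I ×ˢ univ)) {s : ℝ} (hs : s ∈ I)
    {X : Fin 3 → Space → ℝ} (hX : ∀ i, ContDiff ℝ 1 (X i))
    (hcons : ∀ y, dt1 e s y = ∑ i, fderiv ℝ (X i) y (EuclideanSpace.single i 1)) (t : ℝ)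
    (x : Space) :
    HasDerivAt
      (fun σ => ∫ z in closedBall (0 : Space) 1, (t - σ) ^ 3 * e σ (x + (t - σ) • z))
      ((t - s) ^ 2 * ∫ w : sphere (0 : Space) 1,
        (∑ i, (w : Space) i * X i (x + (t - s) • (w : Space)) - e s (x + (t - s) • (w : Space)))
          ∂sphereMeasure Space) s := by
  have hcone {β : Type} [TopologicalSpace β] {q : ℝ × Space → β}
      (hq : ContinuousOn q (I ×ˢ univ)) := continuousOn_comp_backwardCone hq
    continuous_id t x (closedBall 0 1)
  have hd := he.differentiableOn one_ne_zero
  have he₀ := hcone he.continuousOn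
  have hdt := hcone (contDiffOn_dt1 hI he (m := 0) le_rfl).continuousOn
  have hD := hcone (contDiffOn_fderiv_slice hI.uniqueDiffOn he (m := 0) le_rfl).continuousOn
  have hr : ContinuousOn (fun p : ℝ × Space => t - p.1) (I ×ˢ closedBall 0 1) := by fun_prop
  have : IsFiniteMeasure (volume.restrict (closedBall (0 : Space) 1)) :=
    isFiniteMeasure_restrict.2 measure_closedBall_lt_top.ne
  rw [← setIntegral_closedBall_sum_fderiv_sub (contDiff_slice he hs) hX, ← integral_const_mul]
  refine (hasDerivAt_integral_of_continuousOn_prod (isCompact_closedBall _ _)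
    (ae_restrict_mem measurableSet_closedBall) hI ((hr.pow 3).mul he₀) ((hr.pow 2).mul
      ((hr.mul hdt).sub ((continuousOn_const.mul he₀).add (hr.mul (hD.clm_apply
        continuousOn_snd)))))
      (fun σ hσ z _ => hasDerivAt_pow_mul_comp_backwardCone hI hd hσ t x z) hs).congr_deriv ?_
  simp only [hcons]

end ConeFlux

section Energy

/-- The energy density `½ k² + ½ |∇h|² + F(h)` of a wave with position `h` and velocity `k`. -/
def energyDensity (F : ℝ → ℝ) (h k : Space → ℝ) (y : Space) : ℝ :=
  1 / 2 * k y ^ 2 + 1 / 2 * ‖gradient h y‖ ^ 2 + F (h y)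

/-- The energy in the ball of centre `x` and radius `r ≥ 0`, pulled back to the unit ball. This
extends it to an odd function of `r`, so that forward and backward cones are treated at once. -/
def ballEnergy (F : ℝ → ℝ) (h k : Space → ℝ) (x : Space) (r : ℝ) : ℝ :=
  ∫ z in closedBall (0 : Space) 1, r ^ 3 * energyDensity F h k (x + r • z)

theorem norm_gradient_sq {ι : Type*} [Fintype ι] [DecidableEq ι] (h : EuclideanSpace ℝ ι → ℝ)
    (y : EuclideanSpace ℝ ι) :
    ‖gradient h y‖ ^ 2 = ∑ i, fderiv ℝ h y (EuclideanSpace.single i 1) ^ 2 := by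
  rw [EuclideanSpace.real_norm_sq_eq]
  refine Finset.sum_congr rfl fun i _ => ?_
  rw [← inner_gradient_left, EuclideanSpace.inner_single_right]
  simp

variable {F : ℝ → ℝ} {u : ℝ → Space → ℝ} {s : ℝ}

theorem contDiffOn_energyDensity {J : Set ℝ} (hJ : UniqueDiffOn ℝ J) {m n : WithTop ℕ∞}
    (hF : ContDiff ℝ m F) (hu : ContDiffOn ℝ n (Function.uncurry u) (J ×ˢ univ))
    (hmn : m + 1 ≤ n) :
    ContDiffOn ℝ m (Function.uncurry fun s => energyDensity F (u s) (velocityWithin J u s))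
      (J ×ˢ univ) := by
  have hgrad : ContDiffOn ℝ m (fun p : ℝ × Space => gradient (u p.1) p.2) (J ×ˢ univ) :=
    (InnerProductSpace.toDual ℝ Space).symm.contDiff.comp_contDiffOn
      (contDiffOn_fderiv_slice hJ hu hmn)
  exact ((contDiffOn_const.mul ((contDiffOn_velocityWithin hJ hu hmn).pow 2)).add
    (contDiffOn_const.mul (hgrad.norm_sq ℝ))).add
      (hF.comp_contDiffOn (hu.of_le (le_self_add.trans hmn)))

variable {I : Set ℝ}

theorem hasDerivAt_fderiv_slice_apply (hI : IsOpen I)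
    (hu : ContDiffOn ℝ 2 (Function.uncurry u) (I ×ˢ univ)) (hs : s ∈ I) (y v : Space) :
    HasDerivAt (fun σ => fderiv ℝ (u σ) y v) (fderiv ℝ (dt1 u s) y v) s := by
  have hd := hu.differentiableOn two_ne_zero
  have htime := (hasDerivAt_fderiv_uncurry_comp hI hu hs (γ := fun σ => (σ, y))
    ((hasDerivAt_id s).prodMk (hasDerivAt_const s y)) rfl).clm_apply
      (hasDerivAt_const s ((0 : ℝ), v))
  refine (htime.congr_of_eventuallyEq ?_).congr_deriv ?_
  · filter_upwards [hI.mem_nhds hs] with σ hσ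
    exact fderiv_slice_apply hI hd hσ y v
  · rw [map_zero, add_zero, fderiv_dt1_apply hI hu hs]
    exact isSymmSndFDerivAt_uncurry hI hu hs y (1, 0) (0, v)

/-- Conservation of energy in differential form, `∂ₜe = div (∂ₜu ∇u)`. -/
theorem dt1_energyDensity (hI : IsOpen I)
    (hu : ContDiffOn ℝ 2 (Function.uncurry u) (I ×ˢ univ)) {f : ℝ → ℝ}
    (hF : ∀ v, HasDerivAt F (f v) v) (hs : s ∈ I) {y : Space}
    (hwave : dt2 u s y - lap (u s) y = -f (u s y)) :
    dt1 (fun s => energyDensity F (u s) (dt1 u s)) s y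
      = ∑ i, fderiv ℝ (fun z => dt1 u s z * fderiv ℝ (u s) z (EuclideanSpace.single i 1)) y
          (EuclideanSpace.single i 1) := by
  have hdt1 := contDiffOn_dt1 hI hu (m := 1) le_rfl
  have ht {w : ℝ → Space → ℝ} (hw : ContDiffOn ℝ 1 (Function.uncurry w) (I ×ˢ univ)) :
      HasDerivAt (fun σ => w σ y) (dt1 w s y) s :=
    ((hasDerivWithinAt_slice (hw.differentiableOn one_ne_zero) hs y).hasDerivAt
      (hI.mem_nhds hs)).differentiableAt.hasDerivAt
  have hgrad := HasDerivAt.fun_sum fun i (_ : i ∈ Finset.univ) =>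
    (hasDerivAt_fderiv_slice_apply hI hu hs y (EuclideanSpace.single i 1)).fun_pow 2
  have he := (((ht hdt1).fun_pow 2).const_mul (1 / 2)).fun_add (hgrad.const_mul (1 / 2))
    |>.fun_add ((hF _).comp s (ht (hu.of_le one_le_two)))
  have hflux (i : Fin 3) := fderiv_fun_mul
    ((contDiff_slice hdt1 hs).differentiable one_ne_zero y)
    (((contDiff_slice hu hs).fderiv_right (m := 1) le_rfl).clm_apply
      (contDiff_const (c := EuclideanSpace.single i 1)) |>.differentiable one_ne_zero y)
  have hlap : dt1 (dt1 u) s y = lap (u s) y - f (u s y) := by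
    linarith [show dt2 u s y = dt1 (dt1 u) s y from rfl]
  simp only [← norm_gradient_sq] at he
  refine he.deriv.trans ?_
  rw [hlap]
  simp only [hflux, add_apply, smul_apply, smul_eq_mul, Finset.sum_add_distrib, ← Finset.mul_sum,
    lap, Nat.cast_ofNat, Nat.add_one_sub_one, pow_one, mul_assoc]
  ring

theorem hasDerivAt_ballEnergy (hI : IsOpen I)
    (hu : ContDiffOn ℝ 2 (Function.uncurry u) (I ×ˢ univ)) {f : ℝ → ℝ} (hf : Continuous f)
    (hF : ∀ v, HasDerivAt F (f v) v) (hs : s ∈ I)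
    (hwave : ∀ y, dt2 u s y - lap (u s) y = -f (u s y)) (t : ℝ) (x : Space) :
    HasDerivAt (fun σ => ballEnergy F (u σ) (dt1 u σ) x (t - σ))
      ((t - s) ^ 2 * ∫ w : sphere (0 : Space) 1,
        (dt1 u s (x + (t - s) • (w : Space)) * fderiv ℝ (u s) (x + (t - s) • (w : Space)) w
          - energyDensity F (u s) (dt1 u s) (x + (t - s) • (w : Space)))
        ∂sphereMeasure Space) s := by
  have hFC : ContDiff ℝ 1 F := by
    rw [contDiff_one_iff_deriv]
    exact ⟨fun v => (hF v).differentiableAt, by simpa only [funext fun v => (hF v).deriv] using hf⟩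
  have hdensity : ContDiffOn ℝ 1 (Function.uncurry fun s => energyDensity F (u s) (dt1 u s))
      (I ×ˢ univ) := by
    refine (contDiffOn_energyDensity hI.uniqueDiffOn hFC hu (by norm_num)).congr fun p hp => ?_
    simp only [Function.uncurry, velocityWithin_of_mem_nhds (hI.mem_nhds hp.1)]
  have hflux (i : Fin 3) : ContDiff ℝ 1
      fun z => dt1 u s z * fderiv ℝ (u s) z (EuclideanSpace.single i 1) :=
    (contDiff_slice (contDiffOn_dt1 hI hu le_rfl) hs).mul
      (((contDiff_slice hu hs).fderiv_right le_rfl).clm_apply contDiff_const)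
  have h := hasDerivAt_setIntegral_backwardCone hI hdensity hs hflux
    (fun y => dt1_energyDensity hI hu hF hs (hwave y)) t x
  unfold ballEnergy
  simpa only [mul_left_comm _ (dt1 u s _), ← Finset.mul_sum, sum_mul_apply_single] using h

theorem flux_sub_energyDensity_le (F : ℝ → ℝ) (h k : Space → ℝ) (y : Space)
    (w : sphere (0 : Space) 1) :
    k y * fderiv ℝ h y w - energyDensity F h k y ≤ -F (h y) := by
  have hdir : |fderiv ℝ h y w| ≤ ‖gradient h y‖ := by
    rw [← inner_gradient_left]
    simpa using abs_real_inner_le_norm (gradient h y) (w : Space)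
  have hsq := sq_le_sq' (neg_le_of_abs_le hdir) (le_of_abs_le hdir)
  unfold energyDensity
  linarith [sq_nonneg (k y - fderiv ℝ h y w)]

theorem continuousOn_ballEnergy {J : Set ℝ} (hJ : UniqueDiffOn ℝ J) (hJc : IsCompact J)
    (hF : Continuous F) (hu : ContDiffOn ℝ 1 (Function.uncurry u) (J ×ˢ univ)) (t : ℝ)
    (x : Space) :
    ContinuousOn (fun σ => ballEnergy F (u σ) (velocityWithin J u σ) x (t - σ)) J := by
  have : IsFiniteMeasure (volume.restrict (closedBall (0 : Space) 1)) :=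
    isFiniteMeasure_restrict.2 measure_closedBall_lt_top.ne
  refine continuousOn_integral_of_continuousOn_prod hJc (isCompact_closedBall _ _)
    (ae_restrict_mem measurableSet_closedBall) (ContinuousOn.mul (by fun_prop) ?_)
  exact continuousOn_comp_backwardCone (contDiffOn_energyDensity (m := 0) hJ (contDiff_zero.2 hF)
    hu le_rfl).continuousOn continuous_id t x _

end Energy

section Nonlinearity

theorem one_lt_log_ten_add {a : ℝ} (ha : 0 ≤ a) : 1 < Real.log (10 + a) := by
  rw [Real.lt_log_iff_exp_lt (by positivity)]
  linarith [Real.exp_one_lt_d9]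

theorem loglog_pos {a : ℝ} (ha : 0 ≤ a) : 0 < Real.log (Real.log (10 + a)) :=
  Real.log_pos (one_lt_log_ten_add ha)

theorem loglog_le_loglog {a b : ℝ} (ha : 0 ≤ a) (hab : a ≤ b) :
    Real.log (Real.log (10 + a)) ≤ Real.log (Real.log (10 + b)) :=
  Real.log_le_log (zero_lt_one.trans (one_lt_log_ten_add ha))
    (Real.log_le_log (by positivity) (by gcongr))

/-- The factor by which `log log (10 + a)` can grow when `10 + a` is squared. -/
def loglogDoubling : ℝ := 1 + Real.log 2 / Real.log (Real.log 10)

theorem loglogDoubling_pos : 0 < loglogDoubling := by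
  have := loglog_pos le_rfl
  rw [add_zero] at this
  have := Real.log_pos one_lt_two
  unfold loglogDoubling
  positivity

theorem loglog_le_loglogDoubling_mul {a b : ℝ} (ha : 0 ≤ a) (hb : 0 ≤ b)
    (h : 10 + a ≤ (10 + b) ^ 2) :
    Real.log (Real.log (10 + a)) ≤ loglogDoubling * Real.log (Real.log (10 + b)) := by
  have hlog : Real.log (10 + a) ≤ 2 * Real.log (10 + b) := by
    simpa only [Real.log_pow, Nat.cast_ofNat] using Real.log_le_log (by positivity) h
  have hbase : 0 < Real.log (Real.log 10) := by simpa only [add_zero] using loglog_pos le_rfl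
  have hmono : Real.log (Real.log 10) ≤ Real.log (Real.log (10 + b)) := by
    simpa only [add_zero] using loglog_le_loglog le_rfl hb
  calc Real.log (Real.log (10 + a))
      ≤ Real.log (2 * Real.log (10 + b)) :=
        Real.log_le_log (zero_lt_one.trans (one_lt_log_ten_add ha)) hlog
    _ = Real.log 2 + Real.log (Real.log (10 + b)) :=
        Real.log_mul two_ne_zero (zero_lt_one.trans (one_lt_log_ten_add hb)).ne'
    _ ≤ Real.log 2 / Real.log (Real.log 10) * Real.log (Real.log (10 + b))
          + Real.log (Real.log (10 + b)) := by
        gcongr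
        rw [div_mul_eq_mul_div, le_div_iff₀ hbase]
        exact mul_le_mul_of_nonneg_left hmono (Real.log_pos one_lt_two).le
    _ = loglogDoubling * Real.log (Real.log (10 + b)) := by
        unfold loglogDoubling
        ring

theorem g_pos (c u : ℝ) : 0 < g c u := Real.rpow_pos_of_pos (loglog_pos (sq_nonneg u)) c

theorem g_le_g_of_sq_le {c u v : ℝ} (hc : 0 ≤ c) (h : u ^ 2 ≤ v ^ 2) : g c u ≤ g c v :=
  Real.rpow_le_rpow (loglog_pos (sq_nonneg u)).le (loglog_le_loglog (sq_nonneg u) h) hc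

theorem g_le_mul_g {c u v : ℝ} (hc : 0 ≤ c) (h : 10 + u ^ 2 ≤ (10 + v ^ 2) ^ 2) :
    g c u ≤ loglogDoubling ^ c * g c v := by
  unfold g
  rw [← Real.mul_rpow loglogDoubling_pos.le (loglog_pos (sq_nonneg v)).le]
  exact Real.rpow_le_rpow (loglog_pos (sq_nonneg u)).le
    (loglog_le_loglogDoubling_mul (sq_nonneg u) (sq_nonneg v) h) hc

theorem continuous_g (c : ℝ) : Continuous (g c) := by
  have hlog : ∀ u : ℝ, Real.log (10 + u ^ 2) ≠ 0 := fun u =>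
    (zero_lt_one.trans (one_lt_log_ten_add (sq_nonneg u))).ne'
  have hloglog : Continuous fun u : ℝ => Real.log (Real.log (10 + u ^ 2)) :=
    (Continuous.log (by fun_prop) fun u => by positivity).log hlog
  exact hloglog.rpow_const fun u => Or.inl (loglog_pos (sq_nonneg u)).ne'

theorem continuous_f (c : ℝ) : Continuous (f c) := (continuous_pow 5).mul (continuous_g c)

theorem f_neg (c u : ℝ) : f c (-u) = -f c u := by
  unfold f g
  rw [neg_sq]
  ring

theorem hasDerivAt_Fpot (c v : ℝ) : HasDerivAt (Fpot c) (f c v) v :=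
  intervalIntegral.integral_hasDerivAt_right ((continuous_f c).intervalIntegrable _ _)
    ((continuous_f c).stronglyMeasurableAtFilter _ _) (continuous_f c).continuousAt

theorem continuous_Fpot (c : ℝ) : Continuous (Fpot c) :=
  continuous_iff_continuousAt.2 fun v => (hasDerivAt_Fpot c v).continuousAt

theorem Fpot_zero (c : ℝ) : Fpot c 0 = 0 := intervalIntegral.integral_same

theorem Fpot_neg (c u : ℝ) : Fpot c (-u) = Fpot c u := by
  calc Fpot c (-u) = ∫ v in (0 : ℝ)..-u, -f c (-v) := by simp only [Fpot, f_neg, neg_neg]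
    _ = Fpot c u := by
      rw [intervalIntegral.integral_neg, intervalIntegral.integral_comp_neg, neg_neg, neg_zero,
        ← intervalIntegral.integral_symm, Fpot]

theorem Fpot_abs (c u : ℝ) : Fpot c |u| = Fpot c u := by
  rcases abs_choice u with h | h <;> rw [h]
  exact Fpot_neg c u

theorem Fpot_nonneg (c u : ℝ) : 0 ≤ Fpot c u := by
  rw [← Fpot_abs]
  exact intervalIntegral.integral_nonneg (abs_nonneg u) fun v hv =>
    mul_nonneg (pow_nonneg hv.1 5) (g_pos c v).le

theorem pow_six_mul_g_le_of_nonneg {c u : ℝ} (hc : 0 ≤ c) (hu : 0 ≤ u) :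
    u ^ 6 * g c u ≤ 64 * loglogDoubling ^ c * Fpot c u := by
  have hint : ∀ a b, IntervalIntegrable (f c) volume a b := (continuous_f c).intervalIntegrable
  have hhalf : u / 2 * f c (u / 2) ≤ Fpot c u := by
    calc u / 2 * f c (u / 2) = ∫ _ in (u / 2)..u, f c (u / 2) := by
          rw [intervalIntegral.integral_const, smul_eq_mul, sub_half]
      _ ≤ ∫ v in (u / 2)..u, f c v := by
          refine intervalIntegral.integral_mono_on (by linarith)
            intervalIntegrable_const (hint _ _) fun v hv => ?_
          have hu0 : 0 ≤ u / 2 := by positivity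
          have hv0 : 0 ≤ v := hu0.trans hv.1
          exact mul_le_mul (pow_le_pow_left₀ hu0 hv.1 5)
            (g_le_g_of_sq_le hc (pow_le_pow_left₀ hu0 hv.1 2)) (g_pos _ _).le (by positivity)
      _ ≤ Fpot c (u / 2) + ∫ v in (u / 2)..u, f c v := le_add_of_nonneg_left (Fpot_nonneg _ _)
      _ = Fpot c u := intervalIntegral.integral_add_adjacent_intervals (hint _ _) (hint _ _)
  have hg : g c u ≤ loglogDoubling ^ c * g c (u / 2) :=
    g_le_mul_g hc (by nlinarith [sq_nonneg u, sq_nonneg (u ^ 2)])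
  have hκ : 0 < loglogDoubling ^ c := Real.rpow_pos_of_pos loglogDoubling_pos c
  calc u ^ 6 * g c u ≤ u ^ 6 * (loglogDoubling ^ c * g c (u / 2)) := by gcongr
    _ = 64 * loglogDoubling ^ c * (u / 2 * f c (u / 2)) := by unfold f; ring
    _ ≤ 64 * loglogDoubling ^ c * Fpot c u := by gcongr

theorem pow_six_mul_g_le {c : ℝ} (hc : 0 ≤ c) (u : ℝ) :
    u ^ 6 * g c u ≤ 64 * loglogDoubling ^ c * Fpot c u := by
  have h := pow_six_mul_g_le_of_nonneg hc (abs_nonneg u)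
  rwa [Fpot_abs, g, sq_abs, Even.pow_abs (by decide)] at h

end Nonlinearity

section Optimization

theorem mul_pow_le_of_pos {a b l : ℝ} (n : ℕ) (ha : 0 < a) (hb : 0 ≤ b) (hl : 0 < l) :
    a * b ^ n ≤ l * (a ^ 2 * b ^ (n + 1)) + (l ^ n)⁻¹ * (a * (a ^ n)⁻¹) := by
  rcases le_total 1 (l * a * b) with h | h
  · calc a * b ^ n ≤ a * b ^ n * (l * a * b) := le_mul_of_one_le_right (by positivity) h
      _ = l * (a ^ 2 * b ^ (n + 1)) := by ring
      _ ≤ _ := le_add_of_nonneg_right (by positivity)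
  · calc a * b ^ n = (l * a * b) ^ n * ((l ^ n)⁻¹ * (a * (a ^ n)⁻¹)) := by
          rw [mul_pow, mul_pow]
          field_simp
      _ ≤ (l ^ n)⁻¹ * (a * (a ^ n)⁻¹) :=
        mul_le_of_le_one_left (by positivity) (pow_le_one₀ (by positivity) h)
      _ ≤ _ := le_add_of_nonneg_left (by positivity)

theorem le_two_mul_rpow_mul_rpow_of_forall_pos {A E B : ℝ} {n : ℕ} (hn : n ≠ 0) (hE : 0 ≤ E)
    (hB : 0 < B) (h : ∀ l : ℝ, 0 < l → A ≤ l * E + (l ^ n)⁻¹ * B) :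
    A ≤ 2 * (E ^ ((n : ℝ) / (n + 1)) * B ^ ((1 : ℝ) / (n + 1))) := by
  rcases hE.eq_or_lt with rfl | hE
  · have hinv : Tendsto (fun l : ℝ => (l ^ n)⁻¹) atTop (𝓝 0) :=
      (tendsto_pow_atTop hn).inv_tendsto_atTop
    have hlim : Tendsto (fun l : ℝ => l * 0 + (l ^ n)⁻¹ * B) atTop (𝓝 0) := by
      simpa only [mul_zero, zero_add, zero_mul] using hinv.mul_const B
    rw [Real.zero_rpow (by positivity), zero_mul, mul_zero]
    exact ge_of_tendsto hlim ((eventually_gt_atTop 0).mono h)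
  · set a := E ^ ((1 : ℝ) / (n + 1)) with ha
    set b := B ^ ((1 : ℝ) / (n + 1)) with hb
    have ha0 : 0 < a := Real.rpow_pos_of_pos hE _
    have hb0 : 0 < b := Real.rpow_pos_of_pos hB _
    have hEa : E = a ^ (n + 1) := by
      rw [ha, ← Real.rpow_natCast, ← Real.rpow_mul hE.le, Nat.cast_succ,
        one_div_mul_cancel (by positivity), Real.rpow_one]
    have hBb : B = b ^ (n + 1) := by
      rw [hb, ← Real.rpow_natCast, ← Real.rpow_mul hB.le, Nat.cast_succ,
        one_div_mul_cancel (by positivity), Real.rpow_one]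
    have hEn : E ^ ((n : ℝ) / (n + 1)) = a ^ n := by
      rw [ha, ← Real.rpow_natCast, ← Real.rpow_mul hE.le, one_div_mul_eq_div]
    calc A ≤ b / a * E + ((b / a) ^ n)⁻¹ * B := h (b / a) (by positivity)
      _ = 2 * (a ^ n * b) := by
        rw [hEa, hBb, div_pow, inv_div]
        field_simp
        ring
      _ = 2 * (E ^ ((n : ℝ) / (n + 1)) * b) := by rw [hEn]

end Optimization

section Sobolev

theorem one_sub_exp_neg_sq_mul_le {r : ℝ} (hr : 0 ≤ r) :
    (1 - Real.exp (-r)) ^ 2 * (1 + r ^ 2) ≤ 2 * r ^ 2 := by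
  have hexp : 1 - r ≤ Real.exp (-r) := by linarith [Real.add_one_le_exp (-r)]
  have hle : Real.exp (-r) ≤ 1 := Real.exp_le_one_iff.2 (neg_nonpos.2 hr)
  have hr' : (1 - Real.exp (-r)) ^ 2 ≤ r ^ 2 := pow_le_pow_left₀ (by linarith) (by linarith) 2
  have hone : (1 - Real.exp (-r)) ^ 2 ≤ 1 :=
    pow_le_one₀ (by linarith) (by linarith [Real.exp_pos (-r)])
  nlinarith [sq_nonneg r]

theorem abs_one_sub_exp_neg_mul_le {r : ℝ} (hr : 0 ≤ r) (d : ℝ) :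
    |(1 - Real.exp (-r)) * d| ≤ r ^ 2 * d ^ 2 + 1 / 2 * (1 + r ^ 2)⁻¹ := by
  have hp : 0 < 1 + r ^ 2 := by positivity
  have hmul := mul_le_mul_of_nonneg_right (one_sub_exp_neg_sq_mul_le hr) (sq_nonneg d)
  have hyoung := two_mul_le_add_mul_sq (a := |(1 - Real.exp (-r)) * d|) (b := 1) hp
  rw [sq_abs, mul_pow] at hyoung
  linarith

/-- The weight `a = 1 - exp (-r)` solves `a' = 1 - a`. -/
theorem deriv_one_sub_exp_neg_mul_deriv_sub {φ : ℝ → ℝ} (hφ : ContDiff ℝ 2 φ) :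
    deriv (fun r => (1 - Real.exp (-r)) * deriv φ r - φ r)
      = fun r => (1 - Real.exp (-r)) * (deriv (deriv φ) r - deriv φ r) := by
  funext r
  have hweight : HasDerivAt (fun r => 1 - Real.exp (-r)) (Real.exp (-r)) r := by
    simpa only [mul_neg, mul_one, neg_neg] using ((hasDerivAt_neg r).exp).const_sub 1
  have hφ₁ := (hφ.differentiable two_ne_zero r).hasDerivAt
  have hφ' : ContDiff ℝ 1 (deriv φ) := hφ.iterate_deriv' 1 1
  have hφ₂ := (hφ'.differentiable one_ne_zero r).hasDerivAt
  refine ((hweight.fun_mul hφ₂).fun_sub hφ₁).deriv.trans ?_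
  ring

theorem abs_apply_zero_le_integral_Ioi {φ : ℝ → ℝ} (hφ : ContDiff ℝ 2 φ)
    (hc : HasCompactSupport φ) :
    |φ 0| ≤ (∫ r in Ioi (0 : ℝ), r ^ 2 * (deriv (deriv φ) r - deriv φ r) ^ 2) + 1 := by
  set δ : ℝ → ℝ := fun r => deriv (deriv φ) r - deriv φ r
  have hφ' : ContDiff ℝ 1 (deriv φ) := hφ.iterate_deriv' 1 1
  have hδ : Continuous δ := (hφ'.continuous_deriv le_rfl).sub hφ'.continuous
  have hδc : HasCompactSupport δ := hc.deriv.deriv.sub hc.deriv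
  have hint : Integrable fun r => r ^ 2 * δ r ^ 2 :=
    Continuous.integrable_of_hasCompactSupport (by fun_prop)
      ((hδc.comp_left (g := fun y => y ^ 2) (zero_pow two_ne_zero)).mul_left)
  have hint' : Integrable fun r : ℝ => 1 / 2 * (1 + r ^ 2)⁻¹ :=
    integrable_inv_one_add_sq.const_mul _
  have hFTC : ∫ r in Ioi (0 : ℝ), (1 - Real.exp (-r)) * δ r = φ 0 := by
    have hΨ : ContDiff ℝ 1 fun r => (1 - Real.exp (-r)) * deriv φ r - φ r := by
      have := hφ.of_le one_le_two
      fun_prop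
    rw [← deriv_one_sub_exp_neg_mul_deriv_sub hφ,
      HasCompactSupport.integral_Ioi_deriv_eq hΨ (hc.deriv.mul_left.sub hc)]
    simp only [neg_zero, Real.exp_zero, sub_self, zero_mul, zero_sub, neg_neg]
  calc |φ 0| ≤ ∫ r in Ioi (0 : ℝ), |(1 - Real.exp (-r)) * δ r| :=
        hFTC ▸ abs_integral_le_integral_abs
    _ ≤ ∫ r in Ioi (0 : ℝ), (r ^ 2 * δ r ^ 2 + 1 / 2 * (1 + r ^ 2)⁻¹) :=
        setIntegral_mono_on
          (Continuous.integrable_of_hasCompactSupport (by fun_prop) hδc.mul_left).abs.integrableOn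
          (hint.add hint').integrableOn measurableSet_Ioi
          fun r hr => abs_one_sub_exp_neg_mul_le (mem_Ioi.1 hr).le _
    _ = (∫ r in Ioi (0 : ℝ), r ^ 2 * δ r ^ 2) + Real.pi / 4 := by
        rw [integral_add hint.integrableOn hint'.integrableOn, integral_const_mul,
          integral_Ioi_inv_one_add_sq, Real.arctan_zero]
        ring
    _ ≤ (∫ r in Ioi (0 : ℝ), r ^ 2 * δ r ^ 2) + 1 := by linarith [Real.pi_lt_four]

theorem sphereMeasure_real_univ_Space : (sphereMeasure Space).real univ = 4 * Real.pi := by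
  have hvol : volume.real (ball (0 : Space) 1) = Real.pi * 4 / 3 := by
    rw [measureReal_def, EuclideanSpace.volume_ball_fin_three, ENNReal.ofReal_one, one_pow, one_mul,
      ENNReal.toReal_ofReal (by positivity)]
  rw [sphereMeasure, Measure.toSphere_real_apply_univ, hvol, finrank_euclideanSpace_fin]
  norm_num
  ring

theorem isClosedEmbedding_add_smul {V : Type*} [NormedAddCommGroup V] [NormedSpace ℝ V] (x : V)
    {w : V} (hw : ‖w‖ = 1) : IsClosedEmbedding fun r : ℝ => x + r • w :=
  (Isometry.of_dist_eq fun a b => by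
    rw [dist_add_left, dist_eq_norm, ← sub_smul, norm_smul, hw, mul_one,
      dist_eq_norm]).isClosedEmbedding

theorem deriv_comp_add_smul {V : Type*} [NormedAddCommGroup V] [NormedSpace ℝ V] {k : V → ℝ}
    (hk : Differentiable ℝ k) (x w : V) :
    deriv (fun r : ℝ => k (x + r • w)) = fun r => fderiv ℝ k (x + r • w) w := by
  funext r
  have hline : HasDerivAt (fun r : ℝ => x + r • w) w r := by
    simpa only [one_smul] using ((hasDerivAt_id' r).smul_const w).const_add x
  exact ((hk _).hasFDerivAt.comp_hasDerivAt r hline).deriv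

theorem hasCompactSupport_norm_sq {X F : Type*} [TopologicalSpace X] [NormedAddCommGroup F]
    {k : X → F} (hc : HasCompactSupport k) : HasCompactSupport fun y => ‖k y‖ ^ 2 :=
  hc.mono fun y hy hy0 => hy (by simp only [hy0, norm_zero, zero_pow two_ne_zero])

theorem sq_fderiv_fderiv_sub_fderiv_le {V : Type*} [NormedAddCommGroup V] [NormedSpace ℝ V]
    (h : V → ℝ) (y : V) {w : V} (hw : ‖w‖ = 1) :
    (fderiv ℝ (fderiv ℝ h) y w w - fderiv ℝ h y w) ^ 2
      ≤ 2 * (‖iteratedFDeriv ℝ 2 h y‖ ^ 2 + ‖fderiv ℝ h y‖ ^ 2) := by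
  have hop := (fderiv ℝ (fderiv ℝ h) y).le_opNorm₂ w w
  rw [← norm_iteratedFDeriv_one, norm_iteratedFDeriv_fderiv] at hop
  have h₂ : |fderiv ℝ (fderiv ℝ h) y w w| ≤ ‖iteratedFDeriv ℝ 2 h y‖ := by
    simpa only [hw, mul_one, Real.norm_eq_abs] using hop
  have h₁ : |fderiv ℝ h y w| ≤ ‖fderiv ℝ h y‖ := by
    simpa only [hw, mul_one, Real.norm_eq_abs] using (fderiv ℝ h y).le_opNorm w
  calc (fderiv ℝ (fderiv ℝ h) y w w - fderiv ℝ h y w) ^ 2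
      ≤ 2 * (fderiv ℝ (fderiv ℝ h) y w w ^ 2 + fderiv ℝ h y w ^ 2) := by
        nlinarith [sq_nonneg (fderiv ℝ (fderiv ℝ h) y w w + fderiv ℝ h y w)]
    _ ≤ 2 * (‖iteratedFDeriv ℝ 2 h y‖ ^ 2 + ‖fderiv ℝ h y‖ ^ 2) := by
        rw [← sq_abs (fderiv ℝ (fderiv ℝ h) y w w), ← sq_abs (fderiv ℝ h y w)]
        gcongr

theorem abs_apply_le_integral_ray {V : Type*} [NormedAddCommGroup V] [NormedSpace ℝ V] {h : V → ℝ}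
    (hh : ContDiff ℝ 2 h) (hc : HasCompactSupport h) (x : V) {w : V} (hw : ‖w‖ = 1) :
    |h x| ≤ (∫ r in Ioi (0 : ℝ), r ^ 2 * (2 * (‖iteratedFDeriv ℝ 2 h (x + r • w)‖ ^ 2
      + ‖fderiv ℝ h (x + r • w)‖ ^ 2))) + 1 := by
  have hline := isClosedEmbedding_add_smul x hw
  have hh' : ContDiff ℝ 1 (fderiv ℝ h) := hh.fderiv_right le_rfl
  have hcont' := hh'.continuous
  have := hh.continuous_iteratedFDeriv le_rfl
  have hφ' := deriv_comp_add_smul (hh.differentiable two_ne_zero) x w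
  have hφ'' : deriv (deriv fun r : ℝ => h (x + r • w))
      = fun r => fderiv ℝ (fderiv ℝ h) (x + r • w) w w := by
    rw [hφ', deriv_comp_add_smul (hh'.clm_apply contDiff_const |>.differentiable one_ne_zero)]
    funext r
    exact fderiv_fderiv_apply hh _ w w
  have hint : Integrable fun r : ℝ => r ^ 2 * (2 * (‖iteratedFDeriv ℝ 2 h (x + r • w)‖ ^ 2
      + ‖fderiv ℝ h (x + r • w)‖ ^ 2)) := by
    have hc₁ : HasCompactSupport fun r : ℝ => ‖fderiv ℝ h (x + r • w)‖ ^ 2 :=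
      (hasCompactSupport_norm_sq (hc.fderiv ℝ)).comp_isClosedEmbedding hline
    have hc₂ : HasCompactSupport fun r : ℝ => ‖iteratedFDeriv ℝ 2 h (x + r • w)‖ ^ 2 :=
      (hasCompactSupport_norm_sq (hc.iteratedFDeriv 2)).comp_isClosedEmbedding hline
    exact Continuous.integrable_of_hasCompactSupport (by fun_prop)
      (((hc₂.add hc₁).mul_left).mul_left)
  have hφ := abs_apply_zero_le_integral_Ioi (φ := fun r => h (x + r • w))
    (by fun_prop) (hc.comp_isClosedEmbedding hline)
  rw [hφ'', hφ', zero_smul, add_zero] at hφ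
  refine hφ.trans (add_le_add_left (integral_mono_of_nonneg (ae_of_all _ fun r => by positivity)
    hint.integrableOn (ae_of_all _ fun r => mul_le_mul_of_nonneg_left
      (sq_fderiv_fderiv_sub_fderiv_le h _ hw) (sq_nonneg r))) 1)

theorem mul_abs_apply_le_integral {h : Space → ℝ} (hh : ContDiff ℝ 2 h) (hc : HasCompactSupport h)
    (x : Space) :
    4 * Real.pi * |h x| ≤ 2 * ((∫ y, ‖iteratedFDeriv ℝ 2 h y‖ ^ 2) + ∫ y, ‖fderiv ℝ h y‖ ^ 2)
      + 4 * Real.pi := by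
  have h₁ : Integrable fun y => ‖fderiv ℝ h y‖ ^ 2 :=
    ((hh.continuous_fderiv two_ne_zero).norm.pow 2).integrable_of_hasCompactSupport
      (hasCompactSupport_norm_sq (hc.fderiv ℝ))
  have h₂ : Integrable fun y => ‖iteratedFDeriv ℝ 2 h y‖ ^ 2 :=
    ((hh.continuous_iteratedFDeriv le_rfl).norm.pow 2).integrable_of_hasCompactSupport
      (hasCompactSupport_norm_sq (hc.iteratedFDeriv 2))
  set k : Space → ℝ := fun y => 2 * (‖iteratedFDeriv ℝ 2 h y‖ ^ 2 + ‖fderiv ℝ h y‖ ^ 2) with hk_def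
  have hk : Integrable fun y => k (x + y) := ((h₂.add h₁).const_mul 2).comp_add_left x
  have hray := integrable_integral_ray hk
  have hpolar := integral_eq_integral_sphere_integral_ray hk
  simp only [finrank_euclideanSpace_fin, Nat.add_one_sub_one, smul_eq_mul] at hray hpolar
  calc 4 * Real.pi * |h x| = ∫ _ : sphere (0 : Space) 1, |h x| ∂sphereMeasure Space := by
        rw [integral_const, smul_eq_mul, sphereMeasure_real_univ_Space]
    _ ≤ ∫ w : sphere (0 : Space) 1,
          ((∫ r in Ioi (0 : ℝ), r ^ 2 * k (x + r • (w : Space))) + 1) ∂sphereMeasure Space :=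
        integral_mono (integrable_const _) (hray.add (integrable_const 1)) fun w =>
          abs_apply_le_integral_ray hh hc x (norm_eq_of_mem_sphere w)
    _ = (∫ y, k y) + 4 * Real.pi := by
        rw [integral_add hray (integrable_const 1), ← hpolar, integral_const, smul_eq_mul, mul_one,
          sphereMeasure_real_univ_Space, integral_add_left_eq_self]
    _ = 2 * ((∫ y, ‖iteratedFDeriv ℝ 2 h y‖ ^ 2) + ∫ y, ‖fderiv ℝ h y‖ ^ 2) + 4 * Real.pi := by
        rw [hk_def, integral_const_mul, integral_add h₂ h₁]

theorem abs_apply_le_one_add_sq {h : Space → ℝ} (hh : ContDiff ℝ 2 h) (hc : HasCompactSupport h)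
    {M : ℝ} (hM : H2tildeNorm h ≤ M) (x : Space) : |h x| ≤ 1 + M ^ 2 := by
  have hnorm : ∀ y, ‖gradient h y‖ = ‖fderiv ℝ h y‖ := fun y => LinearIsometryEquiv.norm_map _ _
  simp only [H2tildeNorm, hnorm, ← Real.sqrt_eq_rpow] at hM
  have hpoint := mul_abs_apply_le_integral hh hc x
  set A := ∫ y, ‖iteratedFDeriv ℝ 2 h y‖ ^ 2
  set B := ∫ y, ‖fderiv ℝ h y‖ ^ 2
  have hA : 0 ≤ A := integral_nonneg fun y => by positivity
  have hB : 0 ≤ B := integral_nonneg fun y => by positivity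
  have hAB : A + B ≤ M ^ 2 := by
    nlinarith [Real.sq_sqrt hA, Real.sq_sqrt hB, Real.sqrt_nonneg A, Real.sqrt_nonneg B]
  have hpi : 2 * M ^ 2 ≤ 4 * Real.pi * M ^ 2 := by nlinarith [Real.pi_gt_three, sq_nonneg M]
  refine le_of_mul_le_mul_left ?_ (by positivity : 0 < 4 * Real.pi)
  linarith

end Sobolev

section BallEnergy

variable {F : ℝ → ℝ} {h k : Space → ℝ}

theorem energyDensity_nonneg (hF : ∀ v, 0 ≤ F v) (h k : Space → ℝ) (y : Space) :
    0 ≤ energyDensity F h k y := by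
  have := hF (h y)
  unfold energyDensity
  positivity

theorem ballEnergy_neg_radius (F : ℝ → ℝ) (h k : Space → ℝ) (x : Space) (r : ℝ) :
    ballEnergy F h k x (-r) = -ballEnergy F h k x r := by
  unfold ballEnergy
  rw [← integral_neg, ← integral_indicator measurableSet_closedBall,
    ← integral_indicator measurableSet_closedBall, ← integral_neg_eq_self]
  refine integral_congr_ae (Eventually.of_forall fun z => ?_)
  simp only [indicator, mem_closedBall_zero_iff, norm_neg, smul_neg, neg_smul, neg_neg,
    Odd.neg_pow (by decide : Odd 3), neg_mul]

theorem ballEnergy_eq_setIntegral (F : ℝ → ℝ) (h k : Space → ℝ) (x : Space) {r : ℝ}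
    (hr : 0 < r) :
    ballEnergy F h k x r = ∫ z in closedBall (0 : Space) r, energyDensity F h k (x + z) := by
  unfold ballEnergy
  rw [integral_const_mul, Measure.setIntegral_comp_smul_of_pos volume
    (fun z => energyDensity F h k (x + z)) (closedBall 0 1) hr, smul_unitClosedBall,
    finrank_euclideanSpace_fin, Real.norm_of_nonneg hr.le, smul_eq_mul,
    mul_inv_cancel_left₀ (pow_ne_zero 3 hr.ne')]

theorem ballEnergy_nonneg (hF : ∀ v, 0 ≤ F v) (h k : Space → ℝ) (x : Space) {r : ℝ}
    (hr : 0 ≤ r) : 0 ≤ ballEnergy F h k x r :=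
  integral_nonneg fun _ => mul_nonneg (pow_nonneg hr 3) (energyDensity_nonneg hF _ _ _)

theorem ballEnergy_le_integral (hF : ∀ v, 0 ≤ F v) (hint : Integrable (energyDensity F h k))
    (x : Space) {r : ℝ} (hr : 0 ≤ r) : ballEnergy F h k x r ≤ ∫ y, energyDensity F h k y := by
  have hnonneg := energyDensity_nonneg hF h k
  rcases hr.eq_or_lt with rfl | hr
  · simpa [ballEnergy] using integral_nonneg hnonneg
  · rw [ballEnergy_eq_setIntegral F h k x hr,
      ← integral_add_left_eq_self (energyDensity F h k) x]
    exact setIntegral_le_integral (hint.comp_add_left x) (Eventually.of_forall fun z => hnonneg _)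

theorem integrable_energyDensity_of_ballEnergy_le (hF : ∀ v, 0 ≤ F v)
    (hcont : Continuous (energyDensity F h k)) {E : ℝ} (hE : ∀ r ≥ 0, ballEnergy F h k 0 r ≤ E) :
    Integrable (energyDensity F h k) ∧ ∫ y, energyDensity F h k y ≤ E := by
  have hcover : AECover (volume : Measure Space) atTop fun r : ℝ => closedBall (0 : Space) r :=
    aecover_closedBall tendsto_id
  have hle : ∀ᶠ r : ℝ in atTop, ∫ y in closedBall (0 : Space) r, energyDensity F h k y ≤ E := by
    filter_upwards [eventually_gt_atTop 0] with r hr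
    simpa only [ballEnergy_eq_setIntegral F h k 0 hr, zero_add] using hE r hr.le
  have hint := hcover.integrable_of_integral_bounded_of_nonneg_ae E
    (fun r => hcont.continuousOn.integrableOn_compact (isCompact_closedBall 0 r))
    (Eventually.of_forall (energyDensity_nonneg hF h k)) hle
  exact ⟨hint, le_of_tendsto (hcover.integral_tendsto_of_countably_generated hint) hle⟩

theorem continuous_norm_gradient_sq (hh : ContDiff ℝ 1 h) :
    Continuous fun y => ‖gradient h y‖ ^ 2 := by
  have := hh.continuous_fderiv one_ne_zero
  simp only [norm_gradient_sq]
  fun_prop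

theorem continuous_energyDensity (hF : Continuous F) (hh : ContDiff ℝ 1 h) (hk : Continuous k) :
    Continuous (energyDensity F h k) :=
  (((hk.pow 2).const_mul _).add ((continuous_norm_gradient_sq hh).const_mul _)).add
    (hF.comp hh.continuous)

theorem integral_energyDensity (hF : Continuous F) (hF₀ : ∀ v, 0 ≤ F v) (hh : ContDiff ℝ 1 h)
    (hk : Continuous k) (hint : Integrable (energyDensity F h k)) :
    ∫ y, energyDensity F h k y
      = 1 / 2 * (∫ y, k y ^ 2) + 1 / 2 * (∫ y, ‖gradient h y‖ ^ 2) + ∫ y, F (h y) := by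
  have hdom {q : Space → ℝ} (hq : Continuous q) (hq₀ : ∀ y, 0 ≤ q y)
      (hle : ∀ y, q y ≤ energyDensity F h k y) : Integrable q :=
    hint.mono' hq.aestronglyMeasurable (Eventually.of_forall fun y =>
      (Real.norm_of_nonneg (hq₀ y)).trans_le (hle y))
  have hkin : Integrable fun y => 1 / 2 * k y ^ 2 :=
    hdom (by fun_prop) (fun y => by positivity) fun y => by
      unfold energyDensity
      linarith [hF₀ (h y), sq_nonneg ‖gradient h y‖]
  have hgrad : Integrable fun y => 1 / 2 * ‖gradient h y‖ ^ 2 :=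
    hdom ((continuous_norm_gradient_sq hh).const_mul _) (fun y => by positivity) fun y => by
      unfold energyDensity
      linarith [hF₀ (h y), sq_nonneg (k y)]
  have hpot : Integrable fun y => F (h y) :=
    hdom (hF.comp hh.continuous) (fun y => hF₀ _) fun y => by
      unfold energyDensity
      linarith [sq_nonneg (k y), sq_nonneg ‖gradient h y‖]
  unfold energyDensity
  rw [integral_add (hkin.fun_add hgrad) hpot, integral_add hkin hgrad, integral_const_mul,
    integral_const_mul]

theorem energy_eq_integral_energyDensity (c : ℝ) {u : ℝ → Space → ℝ} {s : ℝ}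
    (hu : ContDiff ℝ 1 (u s)) (hk : Continuous (dt1 u s))
    (hint : Integrable (energyDensity (Fpot c) (u s) (dt1 u s))) :
    energy c u s = ∫ y, energyDensity (Fpot c) (u s) (dt1 u s) y :=
  (integral_energyDensity (continuous_Fpot c) (Fpot_nonneg c) hu hk hint).symm

end BallEnergy

section ClassicalSolution

theorem exists_isOpen_forall_lt_norm_eq_zero {X V : Type*} [TopologicalSpace X] [BaireSpace X]
    [Nonempty X] [NormedAddCommGroup V] {u : X → V → ℝ} (hu : ∀ y, Continuous fun s => u s y)
    (hc : ∀ s, HasCompactSupport (u s)) :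
    ∃ U : Set X, IsOpen U ∧ U.Nonempty ∧ ∃ R : ℝ, ∀ s ∈ U, ∀ y, R < ‖y‖ → u s y = 0 := by
  have hclosed (n : ℕ) : IsClosed {s | ∀ y, (n : ℝ) < ‖y‖ → u s y = 0} := by
    simp only [ofPred_forall]
    exact isClosed_iInter fun y => isClosed_iInter fun _ => isClosed_eq (hu y) continuous_const
  have hcover : ⋃ n : ℕ, {s | ∀ y, (n : ℝ) < ‖y‖ → u s y = 0} = univ := by
    refine eq_univ_of_forall fun s => ?_
    obtain ⟨R, hR⟩ := (hc s).isCompact.isBounded.exists_norm_le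
    obtain ⟨n, hn⟩ := exists_nat_ge R
    refine mem_iUnion.2 ⟨n, fun y hy => image_eq_zero_of_notMem_tsupport fun hmem => ?_⟩
    exact (((hR y hmem).trans hn).trans_lt hy).false
  obtain ⟨n, hn⟩ := nonempty_interior_of_iUnion_of_closed hclosed hcover
  exact ⟨_, isOpen_interior, hn, n, fun s hs => interior_subset hs⟩

theorem energyDensity_eq_zero_of_forall_mem_nhds {F : ℝ → ℝ} (hF : F 0 = 0) {U : Set ℝ} {R s : ℝ}
    (hU : U ∈ 𝓝 s) {u : ℝ → Space → ℝ} (hu : ∀ σ ∈ U, ∀ y, R < ‖y‖ → u σ y = 0) {y : Space}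
    (hy : R < ‖y‖) : energyDensity F (u s) (dt1 u s) y = 0 := by
  have htime : (fun σ => u σ y) =ᶠ[𝓝 s] fun _ => 0 := by
    filter_upwards [hU] with σ hσ using hu σ hσ y hy
  have hspace : u s =ᶠ[𝓝 y] fun _ => 0 := by
    filter_upwards [continuous_norm.continuousAt.eventually_const_lt hy] with z hz
      using hu s (mem_of_mem_nhds hU) z hz
  simp only [energyDensity, dt1, htime.deriv_eq, gradient, hspace.fderiv_eq, hspace.eq_of_nhds,
    hF, deriv_const, fderiv_const_apply, map_zero, norm_zero, ne_eq, OfNat.ofNat_ne_zero,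
    not_false_eq_true, zero_pow, mul_zero, add_zero]

theorem IsClassicalSol.mono {c : ℝ} {J J' : Set ℝ} {u : ℝ → Space → ℝ}
    (hu : IsClassicalSol c J u) (hJ : J' ⊆ J) : IsClassicalSol c J' u where
  smooth := hu.smooth.mono (prod_mono_left hJ)
  compactSpt t ht := hu.compactSpt t (hJ ht)
  eqn t ht := hu.eqn t (hJ ht)

theorem IsClassicalSol.contDiffOn {c : ℝ} {J : Set ℝ} {u : ℝ → Space → ℝ}
    (hu : IsClassicalSol c J u) (n : ℕ) :
    ContDiffOn ℝ n (Function.uncurry u) (J ×ˢ univ) :=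
  hu.smooth.of_le (by exact_mod_cast le_top)

variable {c a b s : ℝ} {u : ℝ → Space → ℝ}

theorem velocityWithin_Icc_eventuallyEq (hs : s ∈ Ioo a b) :
    ∀ᶠ σ in 𝓝 s, velocityWithin (Icc a b) u σ = dt1 u σ := by
  filter_upwards [isOpen_Ioo.mem_nhds hs] with σ hσ
  exact velocityWithin_of_mem_nhds (Icc_mem_nhds hσ.1 hσ.2)

theorem IsClassicalSol.hasDerivAt_ballEnergy (hu : IsClassicalSol c (Icc a b) u)
    (hs : s ∈ Ioo a b) (t : ℝ) (x : Space) :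
    HasDerivAt (fun σ => ballEnergy (Fpot c) (u σ) (velocityWithin (Icc a b) u σ) x (t - σ))
      ((t - s) ^ 2 * ∫ w : sphere (0 : Space) 1,
        (dt1 u s (x + (t - s) • (w : Space)) * fderiv ℝ (u s) (x + (t - s) • (w : Space)) w
          - energyDensity (Fpot c) (u s) (dt1 u s) (x + (t - s) • (w : Space)))
        ∂sphereMeasure Space) s := by
  have hI := hu.mono Ioo_subset_Icc_self
  refine (_root_.hasDerivAt_ballEnergy isOpen_Ioo (hI.contDiffOn 2) (continuous_f c)
    (hasDerivAt_Fpot c) hs (hI.eqn s hs) t x).congr_of_eventuallyEq ?_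
  filter_upwards [velocityWithin_Icc_eventuallyEq hs] with σ hσ
  rw [hσ]

theorem IsClassicalSol.integral_flux_le (hu : IsClassicalSol c (Icc a b) u) (hs : s ∈ Ioo a b)
    (x : Space) (r : ℝ) :
    ∫ w : sphere (0 : Space) 1,
        (dt1 u s (x + r • (w : Space)) * fderiv ℝ (u s) (x + r • (w : Space)) w
          - energyDensity (Fpot c) (u s) (dt1 u s) (x + r • (w : Space))) ∂sphereMeasure Space
      ≤ ∫ w : sphere (0 : Space) 1, -Fpot c (u s (x + r • (w : Space))) ∂sphereMeasure Space := by
  have hI := (hu.mono Ioo_subset_Icc_self).contDiffOn 2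
  have hC1 : ContDiff ℝ 1 (u s) := (contDiff_slice hI hs).of_le one_le_two
  have hu₀ := hC1.continuous
  have := hC1.continuous_fderiv one_ne_zero
  have hk : Continuous (dt1 u s) := (contDiff_slice (contDiffOn_dt1 isOpen_Ioo hI
    (m := 1) le_rfl) hs).continuous
  have he := continuous_energyDensity (continuous_Fpot c) hC1 hk
  have hF := continuous_Fpot c
  exact integral_mono (integrable_sphereMeasure_of_continuous (by fun_prop))
    (integrable_sphereMeasure_of_continuous (by fun_prop))
    fun w => flux_sub_energyDensity_le _ _ _ _ w

theorem IsClassicalSol.antitoneOn_ballEnergy (hu : IsClassicalSol c (Icc a b) u) (hab : a < b)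
    (t : ℝ) (x : Space) :
    AntitoneOn (fun σ => ballEnergy (Fpot c) (u σ) (velocityWithin (Icc a b) u σ) x (t - σ))
      (Icc a b) := by
  refine antitoneOn_of_hasDerivWithinAt_nonpos (convex_Icc a b)
    (continuousOn_ballEnergy (uniqueDiffOn_Icc hab) isCompact_Icc (continuous_Fpot c)
      (hu.contDiffOn 1) t x)
    (fun s hs => (hu.hasDerivAt_ballEnergy (interior_Icc (a := a) ▸ hs) t x).hasDerivWithinAt)
    fun s hs => mul_nonpos_of_nonneg_of_nonpos (sq_nonneg _) ?_
  exact (hu.integral_flux_le (interior_Icc (a := a) ▸ hs) x (t - s)).trans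
    (integral_nonpos fun w => neg_nonpos.2 (Fpot_nonneg c _))

theorem IsClassicalSol.exists_integrable_energyDensity (hu : IsClassicalSol c (Icc a b) u)
    (hab : a < b) :
    ∃ s ∈ Ioo a b, Integrable (energyDensity (Fpot c) (u s) (dt1 u s)) ∧
      energy c u s = ∫ y, energyDensity (Fpot c) (u s) (dt1 u s) y := by
  have hI := hu.mono Ioo_subset_Icc_self
  have hC := hI.contDiffOn 2
  have : Nonempty (Ioo a b) := (nonempty_Ioo.2 hab).to_subtype
  have : BaireSpace (Ioo a b) := isOpen_Ioo.baireSpace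
  obtain ⟨U, hU, ⟨s, hs⟩, R, hR⟩ := exists_isOpen_forall_lt_norm_eq_zero
    (u := fun σ : Ioo a b => u σ)
    (fun y => (ContinuousOn.comp_continuous (f := fun σ : Ioo a b => ((σ : ℝ), y))
      hC.continuousOn (by fun_prop) fun σ => ⟨σ.2, mem_univ y⟩))
    fun σ => hI.compactSpt σ σ.2
  have hzero (y : Space) (hy : R < ‖y‖) : energyDensity (Fpot c) (u s) (dt1 u s) y = 0 :=
    energyDensity_eq_zero_of_forall_mem_nhds (Fpot_zero c)
      ((isOpen_Ioo.isOpenMap_subtype_val U hU).mem_nhds (mem_image_of_mem _ hs))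
      (forall_mem_image.2 hR) hy
  have hk : Continuous (dt1 u s) :=
    (contDiff_slice (contDiffOn_dt1 isOpen_Ioo hC (m := 1) le_rfl) s.2).continuous
  have hC1 : ContDiff ℝ 1 (u s) := (contDiff_slice hC s.2).of_le one_le_two
  have hint : Integrable (energyDensity (Fpot c) (u s) (dt1 u s)) :=
    (continuous_energyDensity (continuous_Fpot c) hC1 hk).integrable_of_hasCompactSupport
      (HasCompactSupport.intro (isCompact_closedBall (0 : Space) R) fun y hy =>
        hzero y (by simpa using hy))
  exact ⟨s, s.2, hint, energy_eq_integral_energyDensity c hC1 hk hint⟩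

theorem IsClassicalSol.ballEnergy_le (hu : IsClassicalSol c (Icc a b) u) (hab : a < b) {E : ℝ}
    (hE : ∀ s ∈ Icc a b, energy c u s = E) (hs : s ∈ Icc a b) (x : Space) {r : ℝ} (hr : 0 ≤ r) :
    ballEnergy (Fpot c) (u s) (velocityWithin (Icc a b) u s) x r ≤ E := by
  obtain ⟨s₀, hs₀, hint, henergy⟩ := hu.exists_integrable_energyDensity hab
  have hs₀' := Ioo_subset_Icc_self hs₀
  have hle₀ {r : ℝ} (hr : 0 ≤ r) :
      ballEnergy (Fpot c) (u s₀) (velocityWithin (Icc a b) u s₀) x r ≤ E := by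
    rw [velocityWithin_of_mem_nhds (Icc_mem_nhds hs₀.1 hs₀.2), ← hE s₀ hs₀', henergy]
    exact ballEnergy_le_integral (Fpot_nonneg c) hint x hr
  rcases le_total s₀ s with hle | hle
  · have hcone := hu.antitoneOn_ballEnergy hab (s + r) x hs₀' hs hle
    simp only [add_sub_cancel_left] at hcone
    exact hcone.trans (hle₀ (by linarith))
  · have hcone := hu.antitoneOn_ballEnergy hab (s - r) x hs hs₀' hle
    simp only [show s - r - s₀ = -(s₀ - s + r) by ring, sub_sub_cancel_left,
      ballEnergy_neg_radius, neg_le_neg_iff] at hcone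
    exact hcone.trans (hle₀ (by linarith))

theorem deriv_eq_zero_or_eq_derivWithin {φ : ℝ → ℝ} {J : Set ℝ}
    (hJ : UniqueDiffWithinAt ℝ J s) : deriv φ s = 0 ∨ deriv φ s = derivWithin φ J s := by
  by_cases h : DifferentiableAt ℝ φ s
  · exact Or.inr (h.derivWithin hJ).symm
  · exact Or.inl (deriv_zero_of_not_differentiableAt h)

/-- At an endpoint of `[a, b]` the two-sided derivative `dt1 u s` could be the junk value `0`
where the true velocity is nonzero; this would make the energy at time `s` drop below `E`. -/
theorem IsClassicalSol.dt1_eq_velocityWithin (hu : IsClassicalSol c (Icc a b) u) (hab : a < b)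
    {E : ℝ} (hE : ∀ s ∈ Icc a b, energy c u s = E) (hs : s ∈ Icc a b)
    (hcont : Continuous (dt1 u s)) : dt1 u s = velocityWithin (Icc a b) u s := by
  have hJ := uniqueDiffOn_Icc hab
  have hC1 : ContDiff ℝ 1 (u s) := contDiff_slice (hu.contDiffOn 1) hs
  have hk : Continuous (velocityWithin (Icc a b) u s) := (contDiff_slice
    (contDiffOn_velocityWithin (m := 0) hJ (hu.contDiffOn 1) le_rfl) hs).continuous
  have hor (y : Space) := deriv_eq_zero_or_eq_derivWithin (φ := fun r => u r y) (hJ s hs)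
  have hF := continuous_Fpot c
  have hdt := continuous_energyDensity hF hC1 hcont
  have hvel := continuous_energyDensity hF hC1 hk
  obtain ⟨hint, hle⟩ := integrable_energyDensity_of_ballEnergy_le (Fpot_nonneg c) hvel
    fun r hr => hu.ballEnergy_le hab hE hs 0 hr
  have hdt_le (y : Space) : energyDensity (Fpot c) (u s) (dt1 u s) y
      ≤ energyDensity (Fpot c) (u s) (velocityWithin (Icc a b) u s) y := by
    have hsq : dt1 u s y ^ 2 ≤ velocityWithin (Icc a b) u s y ^ 2 := by
      rcases hor y with h | h
      · rw [show dt1 u s y = 0 from h, zero_pow two_ne_zero]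
        exact sq_nonneg _
      · exact (congrArg (· ^ 2) h).le
    unfold energyDensity
    gcongr
  have hint' := hint.mono' hdt.aestronglyMeasurable (Eventually.of_forall fun y =>
    (Real.norm_of_nonneg (energyDensity_nonneg (Fpot_nonneg c) _ _ y)).trans_le (hdt_le y))
  have hintegral := ((hE s hs).ge.trans_eq (energy_eq_integral_energyDensity c hC1 hcont hint'))
  have heq := (Continuous.ae_eq_iff_eq volume hdt hvel).1
    ((integral_eq_iff_of_ae_le hint' hint (Eventually.of_forall hdt_le)).1
      ((integral_mono hint' hint hdt_le).antisymm (hle.trans hintegral)))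
  funext y
  have hsq : dt1 u s y ^ 2 = velocityWithin (Icc a b) u s y ^ 2 := by
    have := congrFun heq y
    unfold energyDensity at this
    linarith
  rcases hor y with h | h
  · rw [show dt1 u s y = 0 from h] at hsq ⊢
    rw [zero_pow two_ne_zero] at hsq
    exact (pow_eq_zero_iff two_ne_zero).1 hsq.symm |>.symm
  · exact h

end ClassicalSolution

section Stability

theorem abs_sub_le_of_abs_hasDerivAt_le {φ ψ φ' ψ' : ℝ → ℝ} {a b : ℝ} (hab : a ≤ b)
    (hφ : ContinuousOn φ (Icc a b)) (hψ : ContinuousOn ψ (Icc a b))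
    (hφ' : ∀ s ∈ Ioo a b, HasDerivAt φ (φ' s) s) (hψ' : ∀ s ∈ Ioo a b, HasDerivAt ψ (ψ' s) s)
    (hle : ∀ s ∈ Ioo a b, |φ' s| ≤ ψ' s) : |φ b - φ a| ≤ ψ b - ψ a := by
  simp only [← interior_Icc] at hφ' hψ' hle
  have hsub : MonotoneOn (fun s => ψ s - φ s) (Icc a b) :=
    monotoneOn_of_hasDerivWithinAt_nonneg (convex_Icc a b) (hψ.sub hφ)
      (fun s hs => ((hψ' s hs).sub (hφ' s hs)).hasDerivWithinAt)
      fun s hs => sub_nonneg.2 (le_of_abs_le (hle s hs))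
  have hadd : MonotoneOn (fun s => ψ s + φ s) (Icc a b) :=
    monotoneOn_of_hasDerivWithinAt_nonneg (convex_Icc a b) (hψ.add hφ)
      (fun s hs => ((hψ' s hs).add (hφ' s hs)).hasDerivWithinAt)
      fun s hs => neg_le_iff_add_nonneg'.1 (neg_le_of_abs_le (hle s hs))
  have h₁ := hsub (left_mem_Icc.2 hab) (right_mem_Icc.2 hab) hab
  have h₂ := hadd (left_mem_Icc.2 hab) (right_mem_Icc.2 hab) hab
  exact abs_le.2 ⟨by linarith, by linarith⟩

theorem hasDerivAt_inv_three_mul_pow {t s : ℝ} (hs : t - s ≠ 0) :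
    HasDerivAt (fun σ : ℝ => (3 * (t - σ) ^ 3)⁻¹) ((t - s) ^ 4)⁻¹ s := by
  refine (((((hasDerivAt_id' s).const_sub t).fun_pow 3).const_mul 3).fun_inv
    (by positivity)).congr_deriv ?_
  simp only [Nat.cast_ofNat]
  field_simp

theorem inv_sub_inv_le_of_infDist {a b t : ℝ} (hab : a ≤ b) (ht : t ∉ Icc a b) :
    (3 * (t - b) ^ 3)⁻¹ - (3 * (t - a) ^ 3)⁻¹ ≤ (infDist t (Icc a b) ^ 3)⁻¹ := by
  have hd : 0 < infDist t (Icc a b) :=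
    (isClosed_Icc.notMem_iff_infDist_pos (nonempty_Icc.2 hab)).1 ht
  have hbound {r q : ℝ} (hr : infDist t (Icc a b) ≤ r) (hrq : r ≤ q) :
      (3 * r ^ 3)⁻¹ - (3 * q ^ 3)⁻¹ ≤ (infDist t (Icc a b) ^ 3)⁻¹ := by
    have hq : 0 < q := hd.trans_le (hr.trans hrq)
    calc (3 * r ^ 3)⁻¹ - (3 * q ^ 3)⁻¹ ≤ (3 * r ^ 3)⁻¹ := sub_le_self _ (by positivity)
      _ ≤ (infDist t (Icc a b) ^ 3)⁻¹ := by
        refine inv_anti₀ (by positivity) ?_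
        have := pow_le_pow_left₀ hd.le hr 3
        have := pow_pos hd 3
        linarith
  rcases lt_or_ge b t with hbt | htb
  · refine hbound ?_ (by linarith)
    exact (infDist_le_dist_of_mem (right_mem_Icc.2 hab)).trans_eq
      (by rw [Real.dist_eq, abs_of_pos (sub_pos.2 hbt)])
  · have hta : t < a := lt_of_not_ge fun h => ht ⟨h, htb⟩
    have := hbound (r := a - t) (q := b - t) ((infDist_le_dist_of_mem (left_mem_Icc.2 hab)).trans_eq
      (by rw [Real.dist_eq, abs_of_neg (sub_neg.2 hta), neg_sub])) (by linarith)
    rw [← neg_sub a t, ← neg_sub b t, Odd.neg_pow (by decide), Odd.neg_pow (by decide), mul_neg,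
      mul_neg, inv_neg, inv_neg]
    linarith

theorem abs_mul_abs_f_le {c l r v G : ℝ} (hc : 0 ≤ c) (hl : 0 < l) (hr : r ≠ 0)
    (hG : g c v ≤ G) :
    |r| * |f c v| ≤ l * (64 * loglogDoubling ^ c * (r ^ 2 * Fpot c v))
      + (l ^ 5)⁻¹ * (G * (r ^ 4)⁻¹) := by
  have hg := (g_pos c v).le
  have hyoung := mul_pow_le_of_pos 5 (abs_pos.2 hr) (abs_nonneg v) hl
  have hinv : |r| * (|r| ^ 5)⁻¹ = (r ^ 4)⁻¹ := by
    rw [← Even.pow_abs (by decide : Even 4) r]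
    have := abs_pos.2 hr
    field_simp
  rw [hinv, sq_abs, Even.pow_abs (by decide : Even (5 + 1))] at hyoung
  calc |r| * |f c v| = |r| * |v| ^ 5 * g c v := by
        rw [f, abs_mul, abs_of_nonneg hg, abs_pow, mul_assoc]
    _ ≤ (l * (r ^ 2 * v ^ (5 + 1)) + (l ^ 5)⁻¹ * (r ^ 4)⁻¹) * g c v := by gcongr
    _ = l * (r ^ 2 * (v ^ 6 * g c v)) + (l ^ 5)⁻¹ * (g c v * (r ^ 4)⁻¹) := by ring
    _ ≤ l * (r ^ 2 * (64 * loglogDoubling ^ c * Fpot c v)) + (l ^ 5)⁻¹ * (G * (r ^ 4)⁻¹) := by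
        gcongr ?_ * (_ * ?_) + _ * (?_ * _)
        exact pow_six_mul_g_le hc v
    _ = _ := by ring

theorem abs_mul_integral_sphere_f_le {c l r G : ℝ} {h : Space → ℝ} (hh : Continuous h)
    (hc : 0 ≤ c) (hl : 0 < l) (hr : r ≠ 0) (hG : ∀ y, g c (h y) ≤ G) (x : Space) :
    |r * ∫ w : sphere (0 : Space) 1, -f c (h (x + r • (w : Space))) ∂sphereMeasure Space|
      ≤ l * (64 * loglogDoubling ^ c
          * -(r ^ 2 * ∫ w : sphere (0 : Space) 1, -Fpot c (h (x + r • (w : Space)))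
            ∂sphereMeasure Space))
        + (l ^ 5)⁻¹ * (G * (sphereMeasure Space).real univ * (r ^ 4)⁻¹) := by
  have hf := continuous_f c
  have hF := continuous_Fpot c
  have hFint : Integrable (fun w : sphere (0 : Space) 1 => l * (64 * loglogDoubling ^ c
      * (r ^ 2 * Fpot c (h (x + r • (w : Space)))))) (sphereMeasure Space) :=
    integrable_sphereMeasure_of_continuous (by fun_prop)
  calc |r * ∫ w : sphere (0 : Space) 1, -f c (h (x + r • (w : Space))) ∂sphereMeasure Space|
      = |r| * |∫ w : sphere (0 : Space) 1, f c (h (x + r • (w : Space))) ∂sphereMeasure Space| := by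
        rw [integral_neg, mul_neg, abs_neg, abs_mul]
    _ ≤ |r| * ∫ w : sphere (0 : Space) 1, |f c (h (x + r • (w : Space)))| ∂sphereMeasure Space := by
        gcongr
        exact abs_integral_le_integral_abs
    _ = ∫ w : sphere (0 : Space) 1, |r| * |f c (h (x + r • (w : Space)))| ∂sphereMeasure Space :=
        (integral_const_mul _ _).symm
    _ ≤ ∫ w : sphere (0 : Space) 1, (l * (64 * loglogDoubling ^ c
          * (r ^ 2 * Fpot c (h (x + r • (w : Space))))) + (l ^ 5)⁻¹ * (G * (r ^ 4)⁻¹))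
          ∂sphereMeasure Space :=
        integral_mono (integrable_sphereMeasure_of_continuous (by fun_prop))
          (hFint.add (integrable_const _)) fun w => abs_mul_abs_f_le hc hl hr (hG _)
    _ = _ := by
        rw [integral_add hFint (integrable_const _), integral_const, smul_eq_mul]
        simp only [integral_const_mul, integral_neg]
        ring

theorem g_le_of_H2tildeNorm_le {c M : ℝ} (hc : 0 ≤ c) {h : Space → ℝ} (hh : ContDiff ℝ 2 h)
    (hs : HasCompactSupport h) (hM : H2tildeNorm h ≤ M) (x : Space) :
    g c (h x) ≤ loglogDoubling ^ c * g c M := by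
  refine g_le_mul_g hc ?_
  have hsup := sq_le_sq' (by linarith [abs_nonneg (h x), sq_nonneg M])
    (abs_apply_le_one_add_sq hh hs hM x)
  rw [sq_abs] at hsup
  nlinarith [sq_nonneg M]

theorem energy_nonneg (c : ℝ) (u : ℝ → Space → ℝ) (s : ℝ) : 0 ≤ energy c u s := by
  have hF : 0 ≤ ∫ x, Fpot c (u s x) := integral_nonneg fun x => Fpot_nonneg c _
  unfold energy
  positivity

variable {c a b s : ℝ} {u : ℝ → Space → ℝ}

theorem IsClassicalSol.hasDerivAt_kirchhoffMean (hu : IsClassicalSol c (Icc a b) u)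
    (hs : s ∈ Ioo a b) (t : ℝ) (x : Space) :
    HasDerivAt (fun σ => kirchhoffMean (u σ) (velocityWithin (Icc a b) u σ) x (t - σ))
      ((t - s) * ∫ w : sphere (0 : Space) 1, -f c (u s (x + (t - s) • (w : Space)))
        ∂sphereMeasure Space) s := by
  have hI := hu.mono Ioo_subset_Icc_self
  have hderiv := _root_.hasDerivAt_kirchhoffMean isOpen_Ioo (hI.contDiffOn 2) hs t x
  simp only [hI.eqn s hs] at hderiv
  refine hderiv.congr_of_eventuallyEq ?_
  filter_upwards [velocityWithin_Icc_eventuallyEq hs] with σ hσ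
  rw [hσ]

/-- The Kirchhoff means at the two ends of `[a, b]` differ by the integral of `-(t - s) f(u)` over
the light cone. By Young's inequality with parameter `l` this is split into a multiple of the energy
flux through the cone and the integral of a multiple of `(t - s)⁻⁴`. -/
theorem IsClassicalSol.abs_kirchhoffMean_sub_le (hc : 0 ≤ c) (hu : IsClassicalSol c (Icc a b) u)
    (hab : a < b) {l t G : ℝ} (hl : 0 < l) (ht : t ∉ Icc a b)
    (hG : ∀ s ∈ Icc a b, ∀ y, g c (u s y) ≤ G) (x : Space) :
    |kirchhoffMean (u b) (velocityWithin (Icc a b) u b) x (t - b)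
        - kirchhoffMean (u a) (velocityWithin (Icc a b) u a) x (t - a)|
      ≤ l * (64 * loglogDoubling ^ c
          * (ballEnergy (Fpot c) (u a) (velocityWithin (Icc a b) u a) x (t - a)
            - ballEnergy (Fpot c) (u b) (velocityWithin (Icc a b) u b) x (t - b)))
        + (l ^ 5)⁻¹ * (G * (sphereMeasure Space).real univ
          * ((3 * (t - b) ^ 3)⁻¹ - (3 * (t - a) ^ 3)⁻¹)) := by
  have hJ := uniqueDiffOn_Icc hab
  have hne (s : ℝ) (hs : s ∈ Icc a b) : t - s ≠ 0 := sub_ne_zero.2 (ne_of_mem_of_not_mem hs ht).symm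
  have hκ := (Real.rpow_pos_of_pos loglogDoubling_pos c).le
  have hinv : ContinuousOn (fun σ : ℝ => (3 * (t - σ) ^ 3)⁻¹) (Icc a b) :=
    ContinuousOn.inv₀ (by fun_prop) fun σ hσ => by have := hne σ hσ; positivity
  refine (abs_sub_le_of_abs_hasDerivAt_le hab.le
    (continuousOn_kirchhoffMean hJ isCompact_Icc (hu.contDiffOn 1) t x)
    (((((continuousOn_ballEnergy hJ isCompact_Icc (continuous_Fpot c) (hu.contDiffOn 1) t
      x).neg.const_mul _).const_mul l).add ((hinv.const_mul _).const_mul (l ^ 5)⁻¹)))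
    (fun s hs => hu.hasDerivAt_kirchhoffMean hs t x)
    (fun s hs => ((((hu.hasDerivAt_ballEnergy hs t x).neg.const_mul
      (64 * loglogDoubling ^ c)).const_mul l).add (((hasDerivAt_inv_three_mul_pow
        (hne s (Ioo_subset_Icc_self hs))).const_mul (G * (sphereMeasure Space).real univ)).const_mul
          (l ^ 5)⁻¹))) fun s hs => ?_).trans_eq (by simp only [Pi.add_apply, Pi.neg_apply]; ring)
  have hs' := Ioo_subset_Icc_self hs
  refine (abs_mul_integral_sphere_f_le (contDiff_slice (hu.contDiffOn 0) hs').continuous hc hl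
    (hne s hs') (hG s hs') x).trans ?_
  gcongr l * (_ * -(_ * ?_)) + _
  exact hu.integral_flux_le hs x (t - s)

theorem IsClassicalSol.ballEnergy_sub_le (hu : IsClassicalSol c (Icc a b) u) (hab : a < b)
    {E t : ℝ} (hE : ∀ s ∈ Icc a b, energy c u s = E) (ht : t ∉ Icc a b) (x : Space) :
    ballEnergy (Fpot c) (u a) (velocityWithin (Icc a b) u a) x (t - a)
      - ballEnergy (Fpot c) (u b) (velocityWithin (Icc a b) u b) x (t - b) ≤ E := by
  have ha := left_mem_Icc.2 hab.le
  have hb := right_mem_Icc.2 hab.le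
  have hnonneg (s : ℝ) {r : ℝ} := ballEnergy_nonneg (Fpot_nonneg c) (u s)
    (velocityWithin (Icc a b) u s) x (r := r)
  rcases lt_or_ge b t with hbt | htb
  · have hle := hu.ballEnergy_le hab hE ha x (r := t - a) (by linarith)
    linarith [hnonneg b (sub_nonneg.2 hbt.le)]
  · have hta : t < a := lt_of_not_ge fun h => ht ⟨h, htb⟩
    have hle := hu.ballEnergy_le hab hE hb x (sub_nonneg.2 htb)
    rw [← neg_sub a t, ← neg_sub b t, ballEnergy_neg_radius, ballEnergy_neg_radius]
    linarith [hnonneg a (sub_nonneg.2 hta.le)]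

theorem IsClassicalSol.kirchhoffMean_eq_of_free_wave (hu : IsClassicalSol c (Icc a b) u)
    (hab : a < b) {E : ℝ} (hE : ∀ s ∈ Icc a b, energy c u s = E) {T : ℝ} (hT : T ∈ Icc a b)
    {v : ℝ → Space → ℝ} (hv : ContDiff ℝ 2 (Function.uncurry v))
    (hwave : ∀ s x, dt2 v s x = lap (v s) x) (hpos : v T = u T) (hvel : dt1 v T = dt1 u T)
    (t : ℝ) (x : Space) :
    kirchhoffMean (u T) (velocityWithin (Icc a b) u T) x (t - T)
      = (sphereMeasure Space).real univ * v t x := by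
  have hcont : Continuous (dt1 v T) := (contDiff_slice
    (contDiffOn_dt1 (m := 1) isOpen_univ hv.contDiffOn le_rfl) (mem_univ T)).continuous
  rw [← hu.dt1_eq_velocityWithin hab hE hT (hvel ▸ hcont), ← hvel, ← hpos]
  exact _root_.kirchhoffMean_eq_of_free_wave hv (fun s x => sub_eq_zero.2 (hwave s x)) T t x

theorem eq_of_free_wave {v₁ v₂ : ℝ → Space → ℝ} (hv₁ : ContDiff ℝ 2 (Function.uncurry v₁))
    (hv₂ : ContDiff ℝ 2 (Function.uncurry v₂)) (hwave₁ : ∀ s x, dt2 v₁ s x = lap (v₁ s) x)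
    (hwave₂ : ∀ s x, dt2 v₂ s x = lap (v₂ s) x) {T : ℝ} (hpos : v₁ T = v₂ T)
    (hvel : dt1 v₁ T = dt1 v₂ T) : v₁ = v₂ := by
  ext t x
  have h₁ := kirchhoffMean_eq_of_free_wave hv₁ (fun s x => sub_eq_zero.2 (hwave₁ s x)) T t x
  have h₂ := kirchhoffMean_eq_of_free_wave hv₂ (fun s x => sub_eq_zero.2 (hwave₂ s x)) T t x
  rw [hpos, hvel, h₂, sphereMeasure_real_univ_Space] at h₁
  exact (mul_left_cancel₀ (by positivity) h₁).symm

theorem two_mul_rpow_mul_rpow_eq {K E k γ d : ℝ} (hK : 0 ≤ K) (hE : 0 ≤ E) (hk : 0 ≤ k)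
    (hγ : 0 ≤ γ) (hd : 0 ≤ d) :
    2 * ((K * E) ^ ((5 : ℝ) / 6) * (k * γ * (d ^ 3)⁻¹) ^ ((1 : ℝ) / 6))
      = 2 * (K ^ ((5 : ℝ) / 6) * k ^ ((1 : ℝ) / 6)) * E ^ ((5 : ℝ) / 6) * γ ^ ((1 : ℝ) / 6)
        / d ^ ((1 : ℝ) / 2) := by
  have hd' : ((d ^ 3)⁻¹) ^ ((1 : ℝ) / 6) = (d ^ ((1 : ℝ) / 2))⁻¹ := by
    rw [Real.inv_rpow (by positivity), ← Real.rpow_natCast, ← Real.rpow_mul hd]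
    norm_num
  rw [Real.mul_rpow hK hE, Real.mul_rpow (by positivity) (by positivity), Real.mul_rpow hk hγ, hd']
  ring

theorem IsClassicalSol.abs_sub_le_of_free_wave (hc : 0 ≤ c) (hu : IsClassicalSol c (Icc a b) u)
    (hab : a < b) {E M t : ℝ} (hE : ∀ s ∈ Icc a b, energy c u s = E)
    (hM : ∀ s ∈ Icc a b, H2tildeNorm (u s) ≤ M) (ht : t ∉ Icc a b) {v₁ v₂ : ℝ → Space → ℝ}
    (hv₁ : ContDiff ℝ 2 (Function.uncurry v₁)) (hv₂ : ContDiff ℝ 2 (Function.uncurry v₂))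
    (hwave₁ : ∀ s x, dt2 v₁ s x = lap (v₁ s) x) (hwave₂ : ∀ s x, dt2 v₂ s x = lap (v₂ s) x)
    (hpos₁ : v₁ a = u a) (hvel₁ : dt1 v₁ a = dt1 u a) (hpos₂ : v₂ b = u b)
    (hvel₂ : dt1 v₂ b = dt1 u b) (x : Space) :
    4 * Real.pi * |v₂ t x - v₁ t x| ≤ 2 * ((64 * loglogDoubling ^ c * E) ^ ((5 : ℝ) / 6)
      * (loglogDoubling ^ c * (4 * Real.pi) * g c M * (infDist t (Icc a b) ^ 3)⁻¹)
        ^ ((1 : ℝ) / 6)) := by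
  have hκ := Real.rpow_pos_of_pos loglogDoubling_pos c
  have hγ := g_pos c M
  have hE₀ : 0 ≤ E := (energy_nonneg c u a).trans_eq (hE a (left_mem_Icc.2 hab.le))
  have hd := (isClosed_Icc.notMem_iff_infDist_pos (nonempty_Icc.2 hab.le)).1 ht
  have hstep (l : ℝ) (hl : 0 < l) : 4 * Real.pi * |v₂ t x - v₁ t x|
      ≤ l * (64 * loglogDoubling ^ c * E) + (l ^ 5)⁻¹
        * (loglogDoubling ^ c * (4 * Real.pi) * g c M * (infDist t (Icc a b) ^ 3)⁻¹) := by
    have hmean := hu.abs_kirchhoffMean_sub_le hc hab hl ht (fun s hs y => g_le_of_H2tildeNorm_le hc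
      (contDiff_slice (hu.contDiffOn 2) hs) (hu.compactSpt s hs) (hM s hs) y) x
    rw [hu.kirchhoffMean_eq_of_free_wave hab hE (left_mem_Icc.2 hab.le) hv₁ hwave₁ hpos₁ hvel₁,
      hu.kirchhoffMean_eq_of_free_wave hab hE (right_mem_Icc.2 hab.le) hv₂ hwave₂ hpos₂ hvel₂,
      sphereMeasure_real_univ_Space, ← mul_sub, abs_mul, abs_of_pos (by positivity)] at hmean
    refine hmean.trans ?_
    rw [mul_right_comm (loglogDoubling ^ c) (4 * Real.pi)]
    gcongr
    · exact hu.ballEnergy_sub_le hab hE ht x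
    · exact inv_sub_inv_le_of_infDist hab.le ht
  have hopt := le_two_mul_rpow_mul_rpow_of_forall_pos (n := 5) (by decide) (by positivity)
    (by positivity) hstep
  convert hopt using 3 <;> norm_num

end Stability

theorem asymptotic_stability_general (c : ℝ) (hc : 0 ≤ c) :
    ∃ C > (0 : ℝ),
      ∀ (t₁ t₂ t : ℝ) (u v₁ v₂ : ℝ → Space → ℝ) (E M : ℝ),
        t₁ ≤ t₂ → t ∉ Icc t₁ t₂ →
        IsClassicalSol c (Icc t₁ t₂) u →
        (∀ s ∈ Icc t₁ t₂, energy c u s = E) →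
        (∀ s ∈ Icc t₁ t₂, H2tildeNorm (u s) ≤ M) →
        ContDiff ℝ 2 (fun p : ℝ × Space => v₁ p.1 p.2) →
        ContDiff ℝ 2 (fun p : ℝ × Space => v₂ p.1 p.2) →
        (∀ (s : ℝ) (x : Space), dt2 v₁ s x = lap (v₁ s) x) →
        (∀ (s : ℝ) (x : Space), dt2 v₂ s x = lap (v₂ s) x) →
        (∀ x, v₁ t₁ x = u t₁ x) → (∀ x, dt1 v₁ t₁ x = dt1 u t₁ x) →
        (∀ x, v₂ t₂ x = u t₂ x) → (∀ x, dt1 v₂ t₂ x = dt1 u t₂ x) →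
        ∀ x : Space,
          |v₂ t x - v₁ t x|
            ≤ C * E ^ ((5 : ℝ) / 6) * g c M ^ ((1 : ℝ) / 6)
                / infDist t (Icc t₁ t₂) ^ ((1 : ℝ) / 2) := by
  have hκ := Real.rpow_pos_of_pos loglogDoubling_pos c
  set C := 2 * ((64 * loglogDoubling ^ c) ^ ((5 : ℝ) / 6)
    * (loglogDoubling ^ c * (4 * Real.pi)) ^ ((1 : ℝ) / 6))
  have hC₀ : 0 < C := by positivity
  refine ⟨C, hC₀, fun a b t u v₁ v₂ E M hab ht hu hE hM hv₁ hv₂ hwave₁ hwave₂ hpos₁ hvel₁ hpos₂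
    hvel₂ x => ?_⟩
  have hE₀ : 0 ≤ E := (energy_nonneg c u a).trans_eq (hE a (left_mem_Icc.2 hab))
  have hγ := (g_pos c M).le
  have hd : 0 ≤ infDist t (Icc a b) := infDist_nonneg
  rcases hab.eq_or_lt with rfl | hlt
  · rw [eq_of_free_wave hv₁ hv₂ hwave₁ hwave₂ (funext fun y => (hpos₁ y).trans (hpos₂ y).symm)
      (funext fun y => (hvel₁ y).trans (hvel₂ y).symm), sub_self, abs_zero]
    positivity
  · calc |v₂ t x - v₁ t x| ≤ 4 * Real.pi * |v₂ t x - v₁ t x| :=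
          le_mul_of_one_le_left (abs_nonneg _) (by linarith [Real.pi_gt_three])
      _ ≤ _ := hu.abs_sub_le_of_free_wave hc hlt hE hM ht hv₁ hv₂ hwave₁ hwave₂ (funext hpos₁)
          (funext hvel₁) (funext hpos₂) (funext hvel₂) x
      _ = _ := two_mul_rpow_mul_rpow_eq (by positivity) hE₀ (by positivity) hγ hd

/-- Asymptotic stability of the linear evolutions. -/
theorem asymptotic_stability (c : ℝ) (hc : 0 < c) (hc' : c < 8 / 225) :
    ∃ C > (0:ℝ),
      ∀ (t₁ t₂ t₁' t₂' t : ℝ) (u v₁ v₂ : ℝ → Space → ℝ) (E M : ℝ),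
        t₁ ≤ t₂ →
        IsClassicalSol c (Set.Icc t₁ t₂) u →
        (∀ s ∈ Set.Icc t₁ t₂, energy c u s = E) →
        (∀ s ∈ Set.Icc t₁ t₂, H2tildeNorm (u s) ≤ M) →
        t₁' ≤ t₂' → Set.Icc t₁' t₂' ⊆ Set.Icc t₁ t₂ →
        t ∈ Set.Icc t₁ t₂ \ Set.Icc t₁' t₂' →
        ContDiff ℝ (⊤ : ℕ∞) (fun p : ℝ × Space => v₁ p.1 p.2) →
        ContDiff ℝ (⊤ : ℕ∞) (fun p : ℝ × Space => v₂ p.1 p.2) →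
        (∀ (s : ℝ) (x : Space), dt2 v₁ s x = lap (v₁ s) x) →
        (∀ (s : ℝ) (x : Space), dt2 v₂ s x = lap (v₂ s) x) →
        (∀ x, v₁ t₁' x = u t₁' x) → (∀ x, dt1 v₁ t₁' x = dt1 u t₁' x) →
        (∀ x, v₂ t₂' x = u t₂' x) → (∀ x, dt1 v₂ t₂' x = dt1 u t₂' x) →
        ∀ x : Space,
          |v₂ t x - v₁ t x|
            ≤ C * E ^ ((5:ℝ)/6) * (g c M) ^ ((1:ℝ)/6)
                / (Metric.infDist t (Set.Icc t₁' t₂')) ^ ((1:ℝ)/2) := by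
  obtain ⟨C, hC, hbound⟩ := asymptotic_stability_general c hc.le
  refine ⟨C, hC, fun t₁ t₂ t₁' t₂' t u v₁ v₂ E M _ hu hE hM hle hsub ht hv₁ hv₂ => ?_⟩
  exact hbound t₁' t₂' t u v₁ v₂ E M hle ht.2 (hu.mono hsub) (fun s hs => hE s (hsub hs))
    (fun s hs => hM s (hsub hs)) (contDiff_infty.1 hv₁ 2) (contDiff_infty.1 hv₂ 2)
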